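/- Let p be a prime and let ℤ/p act linearly on S^n via an orthogonal representation ρ : ℤ/p → O(n+1) with fixed point set the great k-sphere S^k, where 0 < k < n. If n is even or k is even, then TC_{ℤ/p}(S^n) = 3. -/

import Mathlib

open Set unitInterval

namespace PaperTC

variable {G X : Type*}

/-- The orbit of `x` under the action `act`. -/
def orbit (act : G → X → X) (x : X) : Set X := {y | ∃ g, act g x = y}

/-- The fixed point set of the action `act`. -/
def fixedSet (act : G → X → X) : Set X := {x | ∀ g, act g x = x}

/-- The fixed point set of a subset `S` of the acting group. -/
def fixedSetOf (act : G → X → X) (S : Set G) : Set X := {x | ∀ g ∈ S, act g x = x}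

/-- `minCover P` is the least `k ≥ 1` satisfying `P k`, as an element of `ℕ∞`
(equal to `∞` if there is no such `k`). -/
noncomputable def minCover (P : ℕ → Prop) : ℕ∞ :=
  sInf {k : ℕ∞ | ∃ m : ℕ, k = m ∧ 1 ≤ m ∧ P m}

section Plain

variable (Y : Type*) [TopologicalSpace Y]

/-- `Y × Y` can be covered by `k` open sets each admitting a motion planner. -/
def TCcover (k : ℕ) : Prop :=
  ∃ U : Fin k → Set (Y × Y),
    (∀ i, IsOpen (U i)) ∧ (⋃ i, U i) = univ ∧
    ∀ i, ∃ s : Y × Y → C(I, Y),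
      ContinuousOn s (U i) ∧ ∀ p ∈ U i, s p 0 = p.1 ∧ s p 1 = p.2

/-- Topological complexity (non-reduced, possibly infinite). -/
noncomputable def TC : ℕ∞ := minCover (TCcover Y)

/-- `Y` can be covered by `k` open sets, each of which can be deformed within `Y`
to a point. -/
def catCover (k : ℕ) : Prop :=
  ∃ U : Fin k → Set Y,
    (∀ i, IsOpen (U i)) ∧ (⋃ i, U i) = univ ∧
    ∀ i, ∃ H : Y × I → Y,
      ContinuousOn H (U i ×ˢ (univ : Set I)) ∧ (∀ x ∈ U i, H (x, 0) = x) ∧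
      ∃ y₀, ∀ x ∈ U i, H (x, 1) = y₀

/-- Non-reduced Lusternik–Schnirelmann category. -/
noncomputable def cat : ℕ∞ := minCover (catCover Y)

end Plain

section Equivariant

variable [TopologicalSpace X] (act : G → X → X)

/-- `X × X` can be covered by `k` invariant open sets each admitting an
equivariant motion planner. -/
def eqTCcover (k : ℕ) : Prop :=
  ∃ U : Fin k → Set (X × X),
    (∀ i, IsOpen (U i)) ∧ (⋃ i, U i) = univ ∧
    ∀ i, (∀ g p, p ∈ U i → (act g p.1, act g p.2) ∈ U i) ∧
      ∃ s : X × X → C(I, X),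
        ContinuousOn s (U i) ∧
        (∀ p ∈ U i, s p 0 = p.1 ∧ s p 1 = p.2) ∧
        (∀ g p, p ∈ U i → ∀ t : I, s (act g p.1, act g p.2) t = act g (s p t))

/-- Equivariant topological complexity `TC_G` of Colman and Grant. -/
noncomputable def eqTC : ℕ∞ := minCover (eqTCcover act)

/-- `X × X` can be covered by `k` `(G × G)`-invariant open sets, each admitting a
`(G × G)`-equivariant section of `π^G : P X ×_{X/G} P X → X × X`; such a section is
recorded by a pair of paths `s₁ p`, `s₂ p`, with the orbit of the endpoint of the first
equal to the orbit of the starting point of the second. -/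
def invTCcover (k : ℕ) : Prop :=
  ∃ U : Fin k → Set (X × X),
    (∀ i, IsOpen (U i)) ∧ (⋃ i, U i) = univ ∧
    ∀ i, (∀ g₁ g₂ : G, ∀ p, p ∈ U i → (act g₁ p.1, act g₂ p.2) ∈ U i) ∧
      ∃ s₁ s₂ : X × X → C(I, X),
        ContinuousOn s₁ (U i) ∧ ContinuousOn s₂ (U i) ∧
        (∀ p ∈ U i, s₁ p 0 = p.1 ∧ s₂ p 1 = p.2 ∧
          orbit act (s₁ p 1) = orbit act (s₂ p 0)) ∧
        (∀ g₁ g₂ : G, ∀ p, p ∈ U i → ∀ t : I,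
          s₁ (act g₁ p.1, act g₂ p.2) t = act g₁ (s₁ p t) ∧
          s₂ (act g₁ p.1, act g₂ p.2) t = act g₂ (s₂ p t))

/-- Invariant topological complexity `TC^G` of Lubawski and Marzantowicz. -/
noncomputable def invTC : ℕ∞ := minCover (invTCcover act)

/-- The invariant open set `U` is `G`-compressible into `A`: the inclusion `U ↪ X` is
`G`-equivariantly homotopic to a `G`-map with values in `A`. -/
def GCompressible (A : Set X) (U : Set X) : Prop :=
  (∀ g x, x ∈ U → act g x ∈ U) ∧
  ∃ H : X × I → X,
    ContinuousOn H (U ×ˢ (univ : Set I)) ∧ (∀ x ∈ U, H (x, 0) = x) ∧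
    (∀ g x, x ∈ U → ∀ t : I, H (act g x, t) = act g (H (x, t))) ∧
    (∀ x ∈ U, H (x, 1) ∈ A)

/-- A `G`-categorical set: compressible into a single orbit. -/
def GCategorical (U : Set X) : Prop :=
  ∃ x₀ : X, GCompressible act (orbit act x₀) U

/-- `X` can be covered by `k` open `G`-categorical sets. -/
def catGCover (k : ℕ) : Prop :=
  ∃ U : Fin k → Set X,
    (∀ i, IsOpen (U i)) ∧ (⋃ i, U i) = univ ∧ ∀ i, GCategorical act (U i)

/-- Equivariant Lusternik–Schnirelmann category `cat_G`. -/
noncomputable def catG : ℕ∞ := minCover (catGCover act)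

/-- `X` can be covered by `k` open sets `G`-compressible into `{star}`. -/
def pointedCatGCover (star : X) (k : ℕ) : Prop :=
  ∃ U : Fin k → Set X,
    (∀ i, IsOpen (U i)) ∧ (⋃ i, U i) = univ ∧
    ∀ i, GCompressible act {star} (U i)

/-- The pointed equivariant category `_{{⋆}}cat_G(X)`. -/
noncomputable def pointedCatG (star : X) : ℕ∞ := minCover (pointedCatGCover act star)

/-- `X` is `G`-contractible: the identity is `G`-homotopic to a map with values in a
single orbit. -/
def GContractible : Prop :=
  ∃ H : X × I → X,
    Continuous H ∧ (∀ x, H (x, 0) = x) ∧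
    (∀ g x, ∀ t : I, H (act g x, t) = act g (H (x, t))) ∧
    ∃ x₀ : X, ∀ x, H (x, 1) ∈ orbit act x₀

end Equivariant

/-- The orbit space `X/G` with the quotient topology. -/
abbrev OrbitSpace (act : G → X → X) : Type _ := Quot (fun x y => ∃ g, act g x = y)

end PaperTC
namespace PaperTC

/-- The unit sphere `S^n ⊆ ℝ^{n+1}` (with the Euclidean metric). -/
abbrev Sph (n : ℕ) : Set (EuclideanSpace ℝ (Fin (n + 1))) := Metric.sphere 0 1

/-- The action of `G` on the unit sphere `S^n` obtained by restricting an orthogonal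
representation of `G` on `ℝ^{n+1}`. -/
noncomputable def sphereAct {G : Type*} [Monoid G] {n : ℕ}
    (ρ : G →* (EuclideanSpace ℝ (Fin (n + 1)) ≃ₗᵢ[ℝ] EuclideanSpace ℝ (Fin (n + 1)))) :
    G → ↥(Sph n) → ↥(Sph n) := fun g x =>
  ⟨ρ g x, mem_sphere_zero_iff_norm.mpr (by
    rw [(ρ g).norm_map]; exact mem_sphere_zero_iff_norm.mp x.2)⟩

end PaperTC

open PaperTC

/-!
The lower bound is usually read off from cohomology: the zero divisor `y - x` on `S × S`, with `x`
and `y` the pullbacks of the fundamental class of an even-dimensional sphere `S`, has the square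
`-(x * y + y * x) ≠ 0`. Here the integral `I` of the Jacobian determinant of a pair of directions
takes the place of the cup product. It depends only on the behaviour of the pair outside a compact
set. Two motion planners on a cover of `S × S` deform the first projection `x`, within a compact
set, to maps `g₀` and `g₁` such that near every point where it matters one of them equals the
second projection `y`. Hence `I(g₀, g₁) + I(y, y) = I(g₀, y) + I(y, g₁)`, that is
`I(x, x) + I(y, y) = I(x, y) + I(y, x)`. The left-hand side is zero, while the right-hand side is
positive when the ambient Euclidean space has odd dimension.

Equivariant motion planners restrict to motion planners on the fixed sphere, so it suffices that
one of `S^n` and `S^k` is even-dimensional. Conversely, three planners are enough: for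
non-antipodal pairs the segment between the two points, and for the remaining pairs a broken
segment through one of two fixed points `e` and `f ≠ ±e`, each projected onto the sphere.
-/

namespace PaperTC

open MeasureTheory Filter Topology Module ContinuousLinearMap

section JacobianIntegral

variable {W : Type*} [NormedAddCommGroup W] [NormedSpace ℝ W]

lemma exists_weights_coeff_eq_sum_eval (N : ℕ) {δ : ℝ} (hδ : 0 < δ) :
    ∃ t w : ℕ → ℝ, (∀ i, 0 < t i ∧ t i < δ) ∧ ∀ P : Polynomial ℝ, P.natDegree ≤ N →
      P.coeff N = ∑ i ∈ Finset.range (N + 1), w i * P.eval (t i) := by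
  let t : ℕ → ℝ := fun i => δ / (i + 2)
  have ht_inj : Function.Injective t := fun i j hij => by
    simpa [t, div_eq_mul_inv, hδ.ne'] using hij
  refine ⟨t, fun i => (∏ j ∈ (Finset.range (N + 1)).erase i, (t i - t j))⁻¹,
    fun i => ⟨by positivity, div_lt_self hδ ?_⟩, fun P hP => ?_⟩
  · linarith [(Nat.cast_nonneg i : (0 : ℝ) ≤ i)]
  · have hdeg : P.degree < (Finset.range (N + 1)).card := by
      rw [Finset.card_range]
      exact Polynomial.degree_le_natDegree.trans_lt (by exact_mod_cast Nat.lt_succ_of_le hP)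
    have hcoeff := Lagrange.coeff_eq_sum ht_inj.injOn hdeg
    rw [Finset.card_range, Nat.add_sub_cancel] at hcoeff
    rw [hcoeff]
    exact Finset.sum_congr rfl fun i _ => div_eq_inv_mul _ _

lemma exists_polynomial_eval_eq_det_one_add_smul [FiniteDimensional ℝ W] (A : W →L[ℝ] W) :
    ∃ P : Polynomial ℝ, P.natDegree ≤ finrank ℝ W ∧ P.coeff (finrank ℝ W) = A.det ∧
      ∀ t : ℝ, P.eval t = (1 + t • A).det := by
  let b := Module.finBasis ℝ W
  let M := LinearMap.toMatrix b b (A : W →ₗ[ℝ] W)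
  have hM : M.det = A.det := LinearMap.det_toMatrix b _
  refine ⟨_, by simpa using Polynomial.natDegree_det_X_add_C_le M 1,
    by simpa [hM] using Polynomial.coeff_det_X_add_C_card M 1, fun t => ?_⟩
  have hMt : LinearMap.toMatrix b b ((1 + t • A : W →L[ℝ] W) : W →ₗ[ℝ] W) = 1 + t • M := by
    rw [← LinearMap.toMatrix_one b, ← map_smul, ← map_add]
    rfl
  rw [ContinuousLinearMap.det, ← LinearMap.det_toMatrix b, hMt, ← Polynomial.coe_evalRingHom,
    RingHom.map_det]
  congr 1
  ext i j
  simp [M, Matrix.one_apply, apply_ite, add_comm, mul_comm t]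

lemma exists_weights_det_eq_sum [FiniteDimensional ℝ W] [Nontrivial W] {δ : ℝ} (hδ : 0 < δ) :
    ∃ (s : Finset ℕ) (t w : ℕ → ℝ), (∀ i, 0 < t i ∧ t i < δ) ∧ ∑ i ∈ s, w i = 0 ∧
      ∀ A : W →L[ℝ] W, A.det = ∑ i ∈ s, w i * (1 + t i • A).det := by
  obtain ⟨t, w, ht, hcoeff⟩ := exists_weights_coeff_eq_sum_eval (finrank ℝ W) hδ
  refine ⟨Finset.range (finrank ℝ W + 1), t, w, ht, ?_, fun A => ?_⟩
  · simpa [Polynomial.coeff_one, finrank_pos.ne'] using (hcoeff 1 (by simp)).symm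
  · obtain ⟨P, hdeg, htop, heval⟩ := exists_polynomial_eval_eq_det_one_add_smul A
    simp only [← htop, hcoeff P hdeg, heval]

lemma bijective_id_add_of_lipschitzWith [CompleteSpace W] {f : W → W} {K : NNReal} (hK : K < 1)
    (hf : LipschitzWith K f) : Function.Bijective fun x => x + f x := by
  rcases subsingleton_or_nontrivial W with hW | hW
  · exact Function.bijective_iff_has_inverse.2 ⟨id, fun _ => Subsingleton.elim _ _,
      fun _ => Subsingleton.elim _ _⟩
  have happ : ApproximatesLinearOn (fun x => x + f x)
      (ContinuousLinearEquiv.refl ℝ W : W →L[ℝ] W) univ K := fun x _ y _ => by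
    simpa [add_sub_add_comm] using hf.norm_sub_le x y
  have hK' : K < ‖((ContinuousLinearEquiv.refl ℝ W).symm : W →L[ℝ] W)‖₊⁻¹ := by
    simpa using hK
  exact ⟨injOn_univ.1 (happ.injOn (Or.inr hK')), happ.surjective (Or.inr hK')⟩

lemma image_eq_self_of_bijective_of_eqOn_compl {α : Type*} {g : α → α} {S : Set α}
    (hg : Function.Bijective g) (hS : EqOn g id Sᶜ) : g '' S = S := by
  have himage := image_compl_eq (s := S) hg
  rw [hS.image_eq, image_id] at himage
  exact (compl_injective himage).symm

lemma setIntegral_det_one_add_fderiv [FiniteDimensional ℝ W] [MeasurableSpace W] [BorelSpace W]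
    (μ : Measure W) [μ.IsAddHaarMeasure] {f : W → W} {S : Set W} {K : NNReal}
    (hf : Differentiable ℝ f) (hK : K < 1) (hlip : LipschitzWith K f) (hS : MeasurableSet S)
    (hfS : ∀ x ∉ S, f x = 0) (hdet : ∀ x, 0 ≤ (1 + fderiv ℝ f x).det) :
    ∫ x in S, (1 + fderiv ℝ f x).det ∂μ = μ.real S := by
  have hbij := bijective_id_add_of_lipschitzWith hK hlip
  have himage : (fun x => x + f x) '' S = S :=
    image_eq_self_of_bijective_of_eqOn_compl hbij fun x hx => by simp [hfS x hx]
  have hderiv : ∀ x ∈ S, HasFDerivWithinAt (fun x => x + f x) (1 + fderiv ℝ f x) S x :=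
    fun x _ => ((hasFDerivAt_id x).add (hf x).hasFDerivAt).hasFDerivWithinAt
  have hchange := integral_image_eq_integral_abs_det_fderiv_smul μ hS hderiv hbij.1.injOn
    fun _ => (1 : ℝ)
  simpa [himage, abs_of_nonneg (hdet _)] using hchange.symm

lemma det_zero_continuousLinearMap [FiniteDimensional ℝ W] [Nontrivial W] :
    (0 : W →L[ℝ] W).det = 0 :=
  LinearMap.det_zero''

lemma hasCompactSupport_det_fderiv [FiniteDimensional ℝ W] [Nontrivial W] {h : W → W}
    (hs : HasCompactSupport h) : HasCompactSupport fun x => (fderiv ℝ h x).det :=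
  (hs.fderiv ℝ).comp_left det_zero_continuousLinearMap

lemma continuous_det_fderiv {h : W → W} (hc : ContDiff ℝ 1 h) :
    Continuous fun x => (fderiv ℝ h x).det :=
  ContinuousLinearMap.continuous_det.comp (hc.continuous_fderiv one_ne_zero)

lemma exists_pos_forall_det_one_add_nonneg :
    ∃ ε > 0, ∀ A : W →L[ℝ] W, ‖A‖ < ε → 0 ≤ (1 + A).det := by
  have hcont : Continuous fun A : W →L[ℝ] W => (1 + A).det :=
    ContinuousLinearMap.continuous_det.comp (continuous_const.add continuous_id)
  have hone : (0 : ℝ) < (1 + (0 : W →L[ℝ] W)).det := by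
    simp [ContinuousLinearMap.det]
  obtain ⟨ε, hε, hball⟩ :=
    Metric.eventually_nhds_iff.1 (hcont.continuousAt.eventually (lt_mem_nhds hone))
  exact ⟨ε, hε, fun A hA => (hball (by simpa using hA)).le⟩

lemma exists_pos_forall_setIntegral_det_one_add_smul_fderiv [FiniteDimensional ℝ W]
    [MeasurableSpace W] [BorelSpace W] (μ : Measure W) [μ.IsAddHaarMeasure] {h : W → W}
    (hc : ContDiff ℝ 1 h) (hs : HasCompactSupport h) :
    ∃ δ > 0, ∀ t : ℝ, 0 < t → t < δ →
      ∫ x in tsupport h, (1 + t • fderiv ℝ h x).det ∂μ = μ.real (tsupport h) := by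
  obtain ⟨C, hC⟩ := hc.lipschitzWith_of_hasCompactSupport hs one_ne_zero
  obtain ⟨ε, hε, hdet⟩ := exists_pos_forall_det_one_add_nonneg (W := W)
  refine ⟨min 1 ε / (C + 1), by positivity, fun t ht htδ => ?_⟩
  have htC : t * C < min 1 ε := by
    rw [lt_div_iff₀ (by positivity)] at htδ
    linarith
  have hdiff : Differentiable ℝ h := hc.differentiable one_ne_zero
  have hfderiv : ∀ x, fderiv ℝ (t • h) x = t • fderiv ℝ h x :=
    fun x => (hdiff x).hasFDerivAt.const_smul t |>.fderiv
  have hlip : LipschitzWith (‖t‖₊ * C) (t • h) := (lipschitzWith_smul t).comp hC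
  have hK : ‖t‖₊ * C < 1 := by
    rw [← NNReal.coe_lt_coe]
    simpa [abs_of_pos ht] using htC.trans_le (min_le_left _ _)
  have hnorm : ∀ x, ‖t • fderiv ℝ h x‖ < ε := fun x => by
    rw [norm_smul, Real.norm_of_nonneg ht.le]
    calc t * ‖fderiv ℝ h x‖ ≤ t * C := by gcongr; exact norm_fderiv_le_of_lipschitz ℝ hC
      _ < ε := htC.trans_le (min_le_right _ _)
  simp only [← hfderiv]
  refine setIntegral_det_one_add_fderiv μ (hdiff.const_smul t) hK hlip
    (isClosed_tsupport h).measurableSet (fun x hx => ?_) fun x => ?_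
  · simp [image_eq_zero_of_notMem_tsupport hx]
  · rw [hfderiv]
    exact hdet _ (hnorm x)

variable [FiniteDimensional ℝ W] [Nontrivial W] [MeasurableSpace W] [BorelSpace W]

/-- For small `t` the map `x ↦ x + t • h x` is a bijection, so the polynomial
`t ↦ ∫ det (1 + t • fderiv ℝ h x)` over the support of `h` is constant, and its top coefficient is
the integral of `det (fderiv ℝ h x)`. -/
theorem integral_det_fderiv_eq_zero (μ : Measure W) [μ.IsAddHaarMeasure] {h : W → W}
    (hc : ContDiff ℝ 1 h) (hs : HasCompactSupport h) : ∫ x, (fderiv ℝ h x).det ∂μ = 0 := by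
  obtain ⟨δ, hδ, hconst⟩ := exists_pos_forall_setIntegral_det_one_add_smul_fderiv μ hc hs
  obtain ⟨s, t, w, ht, hw, hdet⟩ := exists_weights_det_eq_sum (W := W) hδ
  have hint : ∀ i ∈ s, IntegrableOn (fun x => w i * (1 + t i • fderiv ℝ h x).det)
      (tsupport h) μ := fun i _ =>
    (ContinuousLinearMap.continuous_det.comp (continuous_const.add
      ((hc.continuous_fderiv one_ne_zero).const_smul (t i)))).continuousOn.integrableOn_compact hs
      |>.const_mul _
  calc ∫ x, (fderiv ℝ h x).det ∂μ
      = ∫ x in tsupport h, (fderiv ℝ h x).det ∂μ := by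
        refine (setIntegral_eq_integral_of_forall_compl_eq_zero fun x hx => ?_).symm
        rw [fderiv_of_notMem_tsupport ℝ hx, det_zero_continuousLinearMap]
    _ = ∑ i ∈ s, w i * ∫ x in tsupport h, (1 + t i • fderiv ℝ h x).det ∂μ := by
        simp only [hdet (fderiv ℝ h _), integral_finsetSum s hint, integral_const_mul]
    _ = ∑ i ∈ s, w i * μ.real (tsupport h) :=
        Finset.sum_congr rfl fun i _ => by rw [hconst _ (ht i).1 (ht i).2]
    _ = 0 := by rw [← Finset.sum_mul, hw, zero_mul]

theorem integral_det_fderiv_sub_det_fderiv_eq_zero (μ : Measure W) [μ.IsAddHaarMeasure]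
    {f g : W → W} (hf : ContDiff ℝ 1 f) (hg : ContDiff ℝ 1 g) (hfg : HasCompactSupport (f - g)) :
    ∫ x, ((fderiv ℝ f x).det - (fderiv ℝ g x).det) ∂μ = 0 := by
  obtain ⟨R, hR⟩ := hfg.isBounded.subset_ball_lt 0 0
  -- Cutting off `g` outside the support of `f - g` makes both maps compactly supported.
  let χ : ContDiffBump (0 : W) := ⟨R, R + 1, hR.1, lt_add_one R⟩
  let g' : W → W := fun x => χ x • g x
  let f' : W → W := g' + (f - g)
  have hg' : ContDiff ℝ 1 g' := χ.contDiff.smul hg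
  have hf' : ContDiff ℝ 1 f' := hg'.add (hf.sub hg)
  have hg's : HasCompactSupport g' := χ.hasCompactSupport.smul_right
  have hf's : HasCompactSupport f' := hg's.add hfg
  have heq : ∀ x, (fderiv ℝ f x).det - (fderiv ℝ g x).det =
      (fderiv ℝ f' x).det - (fderiv ℝ g' x).det := fun x => by
    by_cases hx : x ∈ tsupport (f - g)
    · have hχ : ∀ᶠ y in 𝓝 x, χ y = 1 :=
        (Metric.isOpen_ball.eventually_mem (hR.2 hx)).mono fun y hy =>
          χ.one_of_mem_closedBall (Metric.ball_subset_closedBall hy)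
      have hgx : g' =ᶠ[𝓝 x] g := hχ.mono fun y hy => by simp [g', hy]
      have hfx : f' =ᶠ[𝓝 x] f := hgx.mono fun y hy => by simp [f', hy]
      rw [hfx.fderiv_eq, hgx.fderiv_eq]
    · have h0 : f - g =ᶠ[𝓝 x] 0 := notMem_tsupport_iff_eventuallyEq.1 hx
      have hfx : f =ᶠ[𝓝 x] g := h0.mono fun y hy => sub_eq_zero.1 hy
      have hfx' : f' =ᶠ[𝓝 x] g' := h0.mono fun y hy => by simp only [f', Pi.add_apply, hy,
        Pi.zero_apply, add_zero]
      rw [hfx.fderiv_eq, hfx'.fderiv_eq, sub_self, sub_self]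
  have hint : ∀ {h : W → W}, ContDiff ℝ 1 h → HasCompactSupport h →
      Integrable (fun x => (fderiv ℝ h x).det) μ := fun hc hs =>
    (continuous_det_fderiv hc).integrable_of_hasCompactSupport (hasCompactSupport_det_fderiv hs)
  simp only [heq]
  rw [integral_sub (hint hf' hf's) (hint hg' hg's), integral_det_fderiv_eq_zero μ hf' hf's,
    integral_det_fderiv_eq_zero μ hg' hg's, sub_self]

end JacobianIntegral

section SphericalPair

variable {E : Type*} [NormedAddCommGroup E]

/-- A smooth function that vanishes where `‖v‖ ^ 2 ≤ 2` and equals `1` where `3 ≤ ‖v‖ ^ 2`. -/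
noncomputable def cutoff (v : E) : ℝ := Real.smoothTransition (‖v‖ ^ 2 - 2)

lemma cutoff_nonneg (v : E) : 0 ≤ cutoff v := Real.smoothTransition.nonneg _

lemma cutoff_eq_zero {v : E} (hv : ‖v‖ ^ 2 ≤ 2) : cutoff v = 0 :=
  Real.smoothTransition.zero_of_nonpos (by linarith)

lemma cutoff_eq_one {v : E} (hv : 3 ≤ ‖v‖ ^ 2) : cutoff v = 1 :=
  Real.smoothTransition.one_of_one_le (by linarith)

/-- The closed shell where `cutoff` is not locally constant. -/
def shell (E : Type*) [NormedAddCommGroup E] : Set E := {v | ‖v‖ ^ 2 ∈ Icc (2 : ℝ) 3}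

lemma one_lt_norm_of_two_le_norm_sq {v : E} (hv : 2 ≤ ‖v‖ ^ 2) : 1 < ‖v‖ := by
  nlinarith [norm_nonneg v]

section Directions

variable [NormedSpace ℝ E]

/-- A smooth map that agrees with `NormedSpace.normalize` where `1 / 2 ≤ ‖v‖`. -/
noncomputable def smoothNormalize (v : E) : E :=
  (Real.smoothTransition (8 * ‖v‖ ^ 2 - 1) * ‖v‖⁻¹) • v

lemma smoothNormalize_eq_normalize {v : E} (hv : 1 / 2 ≤ ‖v‖) :
    smoothNormalize v = NormedSpace.normalize v := by
  rw [smoothNormalize, Real.smoothTransition.one_of_one_le (by nlinarith), one_mul,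
    NormedSpace.normalize]

lemma norm_smoothNormalize {v : E} (hv : 1 / 2 ≤ ‖v‖) : ‖smoothNormalize v‖ = 1 := by
  rw [smoothNormalize_eq_normalize hv]
  exact NormedSpace.norm_normalize (norm_pos_iff.1 (by linarith))

/-- The map whose Jacobian determinant encodes the pair `(z, w)`: it is the radial extension of
the pair of directions of `z` and `w`, with radii given by the cutoffs of the two variables. -/
noncomputable def sphericalPair (z w : E × E → E) (p : E × E) : E × E :=
  (cutoff p.1 • smoothNormalize (z p), cutoff p.2 • smoothNormalize (w p))

/-- A `C¹` map `E × E → E` that is bounded away from zero where both variables are outside the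
open unit ball; such a map represents a family of directions in `E`. -/
structure IsAdmissible (z : E × E → E) : Prop where
  contDiff : ContDiff ℝ 1 z
  half_le_norm : ∀ p : E × E, 1 ≤ ‖p.1‖ → 1 ≤ ‖p.2‖ → 1 / 2 ≤ ‖z p‖

lemma isAdmissible_fst : IsAdmissible (Prod.fst : E × E → E) :=
  ⟨contDiff_fst, fun _ h _ => by linarith⟩

lemma isAdmissible_snd : IsAdmissible (Prod.snd : E × E → E) :=
  ⟨contDiff_snd, fun _ _ h => by linarith⟩

lemma sphericalPair_eventuallyEq {z z' w w' : E × E → E} {p : E × E} (hz : z =ᶠ[𝓝 p] z')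
    (hw : w =ᶠ[𝓝 p] w') : sphericalPair z w =ᶠ[𝓝 p] sphericalPair z' w' := by
  filter_upwards [hz, hw] with q hzq hwq
  rw [sphericalPair, sphericalPair, hzq, hwq]

lemma hasCompactSupport_sphericalPair_sub {z z' w w' : E × E → E}
    (hz : HasCompactSupport (z - z')) (hw : HasCompactSupport (w - w')) :
    HasCompactSupport (sphericalPair z w - sphericalPair z' w') := by
  refine .intro (hz.isCompact.union hw.isCompact) fun p hp => ?_
  rw [mem_union, not_or] at hp
  have hzp : z p = z' p := sub_eq_zero.1 (image_eq_zero_of_notMem_tsupport (f := z - z') hp.1)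
  have hwp : w p = w' p := sub_eq_zero.1 (image_eq_zero_of_notMem_tsupport (f := w - w') hp.2)
  rw [Pi.sub_apply, sphericalPair, sphericalPair, hzp, hwp, sub_self]

lemma IsAdmissible.eventually_half_le_norm {z : E × E → E} (hz : IsAdmissible z) {p : E × E}
    (hp₁ : 2 ≤ ‖p.1‖ ^ 2) (hp₂ : 2 ≤ ‖p.2‖ ^ 2) : ∀ᶠ q in 𝓝 p, 1 / 2 ≤ ‖z q‖ := by
  filter_upwards [continuous_fst.norm.continuousAt.eventually
      (lt_mem_nhds (one_lt_norm_of_two_le_norm_sq hp₁)),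
    continuous_snd.norm.continuousAt.eventually
      (lt_mem_nhds (one_lt_norm_of_two_le_norm_sq hp₂))] with q hq₁ hq₂
  exact hz.half_le_norm q hq₁.le hq₂.le

lemma eventually_norm_cutoff_smul_smoothNormalize_eq {W : Type*} [TopologicalSpace W]
    {a z : W → E} {p : W} (ha : ContinuousAt a p) (hz : ∀ᶠ q in 𝓝 p, 1 / 2 ≤ ‖z q‖)
    (hp : 3 < ‖a p‖ ^ 2) : ∀ᶠ q in 𝓝 p, ‖cutoff (a q) • smoothNormalize (z q)‖ = 1 := by
  filter_upwards [(ha.norm.pow 2).eventually (lt_mem_nhds hp), hz] with q hq hzq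
  rw [cutoff_eq_one hq.le, one_smul, norm_smoothNormalize hzq]

lemma eventually_norm_cutoff_smul_eq_zero {W : Type*} [TopologicalSpace W] {a z : W → E} {p : W}
    (ha : ContinuousAt a p) (hp : ‖a p‖ ^ 2 < 2) : ∀ᶠ q in 𝓝 p, ‖cutoff (a q) • z q‖ = 0 := by
  filter_upwards [(ha.norm.pow 2).eventually (gt_mem_nhds hp)] with q hq
  rw [cutoff_eq_zero hq.le, zero_smul, norm_zero]

variable [FiniteDimensional ℝ E]

lemma isCompact_shell : IsCompact (shell E) := by
  refine (isCompact_closedBall (0 : E) 2).of_isClosed_subset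
    (isClosed_Icc.preimage (continuous_norm.pow 2)) fun v hv => ?_
  rw [mem_closedBall_zero_iff]
  nlinarith [hv.2]

variable [Nontrivial E]

lemma det_fderiv_eq_zero_of_eventually_norm_eq {W : Type*} [NormedAddCommGroup W]
    [NormedSpace ℝ W] [FiniteDimensional ℝ W] {F : W → W} {p : W} {L : W →L[ℝ] E}
    (hL : Function.Surjective L) (hF : ContDiffAt ℝ 1 F p) {c : ℝ}
    (hc : ∀ᶠ q in 𝓝 p, ‖L (F q)‖ = c) : (fderiv ℝ F p).det = 0 := by
  by_contra hdet
  have hsurj : Function.Surjective (L.comp (fderiv ℝ F p)) :=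
    hL.comp (((fderiv ℝ F p).toContinuousLinearEquivOfDetNeZero hdet).surjective)
  have hmap : map (fun q => L (F q)) (𝓝 p) = 𝓝 (L (F p)) :=
    (L.hasStrictFDerivAt.comp p (hF.hasStrictFDerivAt one_ne_zero)).map_nhds_eq_of_surj
      (LinearMap.range_eq_top.2 hsurj)
  have hsphere : Metric.sphere (0 : E) c ∈ 𝓝 (L (F p)) := by
    rw [← hmap]
    exact hc.mono fun q hq => mem_sphere_zero_iff_norm.2 hq
  have hinterior := mem_interior_iff_mem_nhds.2 hsphere
  rw [interior_sphere'] at hinterior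
  exact hinterior

end Directions

variable [InnerProductSpace ℝ E]

lemma contDiff_cutoff : ContDiff ℝ 1 (cutoff : E → ℝ) :=
  Real.smoothTransition.contDiff.comp ((contDiff_norm_sq ℝ).sub contDiff_const)

lemma contDiff_smoothNormalize : ContDiff ℝ 1 (smoothNormalize : E → E) := by
  refine contDiff_iff_contDiffAt.2 fun v => ?_
  rcases eq_or_ne v 0 with rfl | hv
  · have hcont : ContinuousAt (fun u : E => 8 * ‖u‖ ^ 2 - 1) 0 := by fun_prop
    refine (contDiffAt_const (c := (0 : E))).congr_of_eventuallyEq ?_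
    filter_upwards [hcont.eventually (gt_mem_nhds (by simp : 8 * ‖(0 : E)‖ ^ 2 - 1 < 0))]
      with u hu
    rw [smoothNormalize, Real.smoothTransition.zero_of_nonpos hu.le, zero_mul, zero_smul]
  · have htransition : ContDiff ℝ 1 fun u : E => Real.smoothTransition (8 * ‖u‖ ^ 2 - 1) :=
      Real.smoothTransition.contDiff.comp
        ((contDiff_const.mul (contDiff_norm_sq ℝ)).sub contDiff_const)
    exact (htransition.contDiffAt.mul
      ((contDiffAt_norm ℝ hv).inv (norm_ne_zero_iff.2 hv))).smul contDiffAt_id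

lemma contDiff_sphericalPair {z w : E × E → E} (hz : ContDiff ℝ 1 z) (hw : ContDiff ℝ 1 w) :
    ContDiff ℝ 1 (sphericalPair z w) :=
  ((contDiff_cutoff.comp contDiff_fst).smul (contDiff_smoothNormalize.comp hz)).prodMk
    ((contDiff_cutoff.comp contDiff_snd).smul (contDiff_smoothNormalize.comp hw))

variable [FiniteDimensional ℝ E] [Nontrivial E]

lemma det_fderiv_sphericalPair_eq_zero {z w : E × E → E} (hz : IsAdmissible z)
    (hw : IsAdmissible w) {p : E × E} (hp : p ∉ shell E ×ˢ shell E) :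
    (fderiv ℝ (sphericalPair z w) p).det = 0 := by
  have hfst {c : ℝ} (h : ∀ᶠ q in 𝓝 p, ‖cutoff q.1 • smoothNormalize (z q)‖ = c) :
      (fderiv ℝ (sphericalPair z w) p).det = 0 :=
    det_fderiv_eq_zero_of_eventually_norm_eq (L := ContinuousLinearMap.fst ℝ E E)
      Prod.fst_surjective (contDiff_sphericalPair hz.contDiff hw.contDiff).contDiffAt h
  have hsnd {c : ℝ} (h : ∀ᶠ q in 𝓝 p, ‖cutoff q.2 • smoothNormalize (w q)‖ = c) :
      (fderiv ℝ (sphericalPair z w) p).det = 0 :=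
    det_fderiv_eq_zero_of_eventually_norm_eq (L := ContinuousLinearMap.snd ℝ E E)
      Prod.snd_surjective (contDiff_sphericalPair hz.contDiff hw.contDiff).contDiffAt h
  rcases lt_or_ge (‖p.1‖ ^ 2) 2 with h₁ | h₁
  · exact hfst (eventually_norm_cutoff_smul_eq_zero continuousAt_fst h₁)
  rcases lt_or_ge (‖p.2‖ ^ 2) 2 with h₂ | h₂
  · exact hsnd (eventually_norm_cutoff_smul_eq_zero continuousAt_snd h₂)
  rcases lt_or_ge 3 (‖p.1‖ ^ 2) with h₃ | h₃
  · exact hfst (eventually_norm_cutoff_smul_smoothNormalize_eq continuousAt_fst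
      (hz.eventually_half_le_norm h₁ h₂) h₃)
  rcases lt_or_ge 3 (‖p.2‖ ^ 2) with h₄ | h₄
  · exact hsnd (eventually_norm_cutoff_smul_smoothNormalize_eq continuousAt_snd
      (hw.eventually_half_le_norm h₁ h₂) h₄)
  exact absurd ⟨⟨h₁, h₃⟩, h₂, h₄⟩ hp

lemma hasCompactSupport_det_fderiv_sphericalPair {z w : E × E → E} (hz : IsAdmissible z)
    (hw : IsAdmissible w) : HasCompactSupport fun p => (fderiv ℝ (sphericalPair z w) p).det :=
  .intro (isCompact_shell.prod isCompact_shell) fun _ hp =>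
    det_fderiv_sphericalPair_eq_zero hz hw hp

variable [MeasurableSpace (E × E)] [BorelSpace (E × E)] (μ : Measure (E × E)) [μ.IsAddHaarMeasure]

lemma integrable_det_fderiv_sphericalPair {z w : E × E → E} (hz : IsAdmissible z)
    (hw : IsAdmissible w) : Integrable (fun p => (fderiv ℝ (sphericalPair z w) p).det) μ :=
  (continuous_det_fderiv (contDiff_sphericalPair hz.contDiff hw.contDiff))
    |>.integrable_of_hasCompactSupport (hasCompactSupport_det_fderiv_sphericalPair hz hw)

/-- The total Jacobian of `sphericalPair z w`, a stand-in for the cup product of two cohomology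
classes of degree `finrank ℝ E - 1`: if `z` and `w` only depend on the directions of the two
variables, it is a positive multiple of the degree of the self-map `(z, w)` of a product of two
spheres. -/
noncomputable def jacobianIntegral (μ : Measure (E × E)) (z w : E × E → E) : ℝ :=
  ∫ p, (fderiv ℝ (sphericalPair z w) p).det ∂μ

lemma jacobianIntegral_congr {z z' w w' : E × E → E} (hz : IsAdmissible z)
    (hz' : IsAdmissible z') (hw : IsAdmissible w) (hw' : IsAdmissible w')
    (hzz' : HasCompactSupport (z - z')) (hww' : HasCompactSupport (w - w')) :
    jacobianIntegral μ z w = jacobianIntegral μ z' w' := by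
  rw [← sub_eq_zero, jacobianIntegral, jacobianIntegral,
    ← integral_sub (integrable_det_fderiv_sphericalPair μ hz hw)
      (integrable_det_fderiv_sphericalPair μ hz' hw')]
  exact integral_det_fderiv_sub_det_fderiv_eq_zero μ
    (contDiff_sphericalPair hz.contDiff hw.contDiff)
    (contDiff_sphericalPair hz'.contDiff hw'.contDiff)
    (hasCompactSupport_sphericalPair_sub hzz' hww')

end SphericalPair

section Determinants

lemma det_prodComm (M : Type*) [AddCommGroup M] [Module ℝ M] [FiniteDimensional ℝ M] :
    LinearMap.det (LinearEquiv.prodComm ℝ M M : M × M →ₗ[ℝ] M × M) = (-1) ^ finrank ℝ M := by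
  -- `φ` diagonalizes the exchange of the two factors.
  let φ : M × M →ₗ[ℝ] M × M :=
    (LinearMap.fst ℝ M M + LinearMap.snd ℝ M M).prod (LinearMap.fst ℝ M M - LinearMap.snd ℝ M M)
  have hφφ : φ ∘ₗ φ = (2 : ℝ) • LinearMap.id := by
    ext <;> simp [φ, two_smul]
  have hφ : LinearMap.det φ ≠ 0 := fun h => by
    have hdet := congrArg LinearMap.det hφφ
    rw [LinearMap.det_comp, h, zero_mul, LinearMap.det_smul, LinearMap.det_id, mul_one] at hdet
    exact pow_ne_zero _ two_ne_zero hdet.symm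
  have hconj : φ ∘ₗ (LinearEquiv.prodComm ℝ M M : M × M →ₗ[ℝ] M × M) =
      LinearMap.id.prodMap ((-1 : ℝ) • LinearMap.id) ∘ₗ φ := by
    ext <;> simp [φ]
  have hdet := congrArg LinearMap.det hconj
  rw [LinearMap.det_comp, LinearMap.det_comp, LinearMap.det_prodMap, LinearMap.det_smul,
    LinearMap.det_id, one_mul, mul_one, mul_comm] at hdet
  exact mul_right_cancel₀ hφ hdet

variable {E : Type*} [NormedAddCommGroup E] [InnerProductSpace ℝ E]

/-- For a unit vector `a`, the linear map that scales the line spanned by `a` by `α` and its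
orthogonal complement by `β`. -/
noncomputable def stretch (a : E) (α β : ℝ) : E →L[ℝ] E :=
  β • ContinuousLinearMap.id ℝ E + (α - β) • (innerSL ℝ a).smulRight a

lemma stretch_apply (a : E) (α β : ℝ) (v : E) :
    stretch a α β v = β • v + (α - β) • inner ℝ a v • a := rfl

lemma det_stretch [FiniteDimensional ℝ E] [Nontrivial E] {a : E} (ha : ‖a‖ = 1) (α β : ℝ) :
    (stretch a α β).det = α * β ^ (finrank ℝ E - 1) := by
  have hne : ∀ β ∈ ({0}ᶜ : Set ℝ), (stretch a α β).det = α * β ^ (finrank ℝ E - 1) := by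
    intro β hβ
    have htransvection : (stretch a α β : E →ₗ[ℝ] E) =
        β • LinearMap.transvection ((α / β - 1) • (innerSL ℝ a : E →ₗ[ℝ] ℝ)) a := by
      ext v
      simp [stretch_apply, LinearMap.transvection.apply, smul_smul, ← mul_assoc, mul_sub,
        mul_div_cancel₀ α hβ]
    rw [ContinuousLinearMap.det, htransvection, LinearMap.det_smul, LinearMap.transvection.det,
      ← Nat.sub_add_cancel (finrank_pos (R := ℝ) (M := E)), pow_succ]
    have hβ' : β ≠ 0 := hβ
    simp only [Nat.succ_eq_add_one, zero_add, toLinearMap_innerSL_apply, LinearMap.smul_apply,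
      innerₛₗ_apply_apply, real_inner_self_eq_norm_sq, ha, one_pow, smul_eq_mul, mul_one,
      add_sub_cancel, add_tsub_cancel_right]
    field_simp
  have hcont : Continuous fun β => (stretch a α β).det :=
    ContinuousLinearMap.continuous_det.comp (by unfold stretch; fun_prop)
  exact congrFun (hcont.ext_on (dense_compl_singleton 0) (by fun_prop) hne) β

end Determinants

section Derivatives

variable {E W : Type*} [NormedAddCommGroup E] [NormedAddCommGroup W] [NormedSpace ℝ W]

/-- The derivative of `cutoff` at `v` in the direction `NormedSpace.normalize v`. -/
noncomputable def cutoffRadialDeriv (v : E) : ℝ :=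
  2 * deriv Real.smoothTransition (‖v‖ ^ 2 - 2) * ‖v‖

lemma cutoffRadialDeriv_nonneg (v : E) : 0 ≤ cutoffRadialDeriv v :=
  mul_nonneg (mul_nonneg zero_le_two Real.smoothTransition.monotone.deriv_nonneg) (norm_nonneg v)

variable [InnerProductSpace ℝ E]

lemma norm_mul_inner_normalize (v u : E) :
    ‖v‖ * inner ℝ (NormedSpace.normalize v) u = inner ℝ v u := by
  conv_rhs => rw [← NormedSpace.norm_smul_normalize v, real_inner_smul_left]

lemma hasFDerivAt_norm {v : E} (hv : v ≠ 0) :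
    HasFDerivAt (fun u : E => ‖u‖) (innerSL ℝ (NormedSpace.normalize v)) v := by
  have hsqrt := (hasStrictFDerivAt_norm_sq v).hasFDerivAt.sqrt (by simpa using hv)
  simp only [Real.sqrt_sq (norm_nonneg _)] at hsqrt
  refine hsqrt.congr_fderiv ?_
  ext u
  have := norm_ne_zero_iff.2 hv
  simp only [smul_apply, coe_innerSL_apply, ← norm_mul_inner_normalize v u, nsmul_eq_mul,
    Nat.cast_ofNat, smul_eq_mul]
  field_simp

lemma hasFDerivAt_cutoff (v : E) :
    HasFDerivAt cutoff (cutoffRadialDeriv v • innerSL ℝ (NormedSpace.normalize v)) v := by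
  have hσ : HasDerivAt Real.smoothTransition (deriv Real.smoothTransition (‖v‖ ^ 2 - 2))
      (‖v‖ ^ 2 - 2) :=
    (Real.smoothTransition.contDiff.differentiable one_ne_zero _).hasDerivAt
  have hsq := (hasStrictFDerivAt_norm_sq v).hasFDerivAt.sub_const 2
  refine (hσ.comp_hasFDerivAt v hsq).congr_fderiv ?_
  ext u
  simp only [smul_apply, coe_innerSL_apply, ← norm_mul_inner_normalize v u, nsmul_eq_mul,
    Nat.cast_ofNat, smul_eq_mul, cutoffRadialDeriv]
  ring

lemma hasFDerivAt_smoothNormalize {v : E} (hv : 1 / 2 < ‖v‖) :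
    HasFDerivAt smoothNormalize (stretch (NormedSpace.normalize v) 0 ‖v‖⁻¹) v := by
  have hv0 : ‖v‖ ≠ 0 := by positivity
  have heq : smoothNormalize =ᶠ[𝓝 v] fun u => ‖u‖⁻¹ • u :=
    (continuous_norm.continuousAt.eventually (lt_mem_nhds hv)).mono fun u hu =>
      smoothNormalize_eq_normalize hu.le
  have hinv := (hasDerivAt_inv hv0).comp_hasFDerivAt v (hasFDerivAt_norm (norm_ne_zero_iff.1 hv0))
  refine ((hinv.smul (hasFDerivAt_id v)).congr_of_eventuallyEq heq).congr_fderiv ?_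
  ext u
  simp only [stretch_apply, Function.comp_apply, NormedSpace.normalize, map_smul, smul_smul,
    neg_mul, neg_smul, id_eq, add_apply, smul_apply, id_apply, smulRight_apply, neg_apply,
    coe_innerSL_apply, smul_eq_mul, ← sub_eq_add_neg, zero_sub, real_inner_smul_left, sub_right_inj]
  field_simp

lemma hasFDerivAt_cutoff_smul_smoothNormalize (L M : W →L[ℝ] E) {p : W} (hM : 1 / 2 < ‖M p‖) :
    HasFDerivAt (fun q => cutoff (L q) • smoothNormalize (M q))
      (cutoff (L p) • (stretch (NormedSpace.normalize (M p)) 0 ‖M p‖⁻¹).comp M +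
        (cutoffRadialDeriv (L p) • (innerSL ℝ (NormedSpace.normalize (L p))).comp L).smulRight
          (NormedSpace.normalize (M p))) p := by
  rw [← smoothNormalize_eq_normalize hM.le]
  exact ((hasFDerivAt_cutoff (L p)).comp p L.hasFDerivAt).smul
    ((smoothNormalize_eq_normalize hM.le ▸ hasFDerivAt_smoothNormalize hM).comp p M.hasFDerivAt)

lemma hasFDerivAt_sphericalPair (M N : E × E →L[ℝ] E) {p : E × E} (hM : 1 / 2 < ‖M p‖)
    (hN : 1 / 2 < ‖N p‖) :
    HasFDerivAt (sphericalPair M N)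
      ((cutoff p.1 • (stretch (NormedSpace.normalize (M p)) 0 ‖M p‖⁻¹).comp M +
        (cutoffRadialDeriv p.1 • (innerSL ℝ (NormedSpace.normalize p.1)).comp
          (ContinuousLinearMap.fst ℝ E E)).smulRight (NormedSpace.normalize (M p))).prod
      (cutoff p.2 • (stretch (NormedSpace.normalize (N p)) 0 ‖N p‖⁻¹).comp N +
        (cutoffRadialDeriv p.2 • (innerSL ℝ (NormedSpace.normalize p.2)).comp
          (ContinuousLinearMap.snd ℝ E E)).smulRight (NormedSpace.normalize (N p)))) p :=
  (hasFDerivAt_cutoff_smul_smoothNormalize (.fst ℝ E E) M hM).prodMk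
    (hasFDerivAt_cutoff_smul_smoothNormalize (.snd ℝ E E) N hN)

end Derivatives

section Evaluation

variable {E : Type*} [NormedAddCommGroup E] [InnerProductSpace ℝ E]

lemma exists_ne_zero_inner_eq_zero [FiniteDimensional ℝ E] (hE : 1 < finrank ℝ E) (a : E) :
    ∃ u : E, u ≠ 0 ∧ inner ℝ a u = 0 := by
  obtain ⟨u, hu, hu0⟩ := (Submodule.ne_bot_iff _).1 (LinearMap.ker_ne_bot_of_finrank_lt
    (f := (innerSL ℝ a : E →ₗ[ℝ] ℝ)) (by rwa [finrank_self]))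
  exact ⟨u, hu0, hu⟩

lemma inner_normalize_eq_zero {a u : E} (h : inner ℝ a u = 0) :
    inner ℝ (NormedSpace.normalize a) u = 0 := by
  rw [NormedSpace.normalize, real_inner_smul_left, h, mul_zero]

lemma det_fderiv_sphericalPair_self_eq_zero [FiniteDimensional ℝ E] {M : E × E →L[ℝ] E}
    {p v : E × E} (hM : 1 / 2 < ‖M p‖) (hv : v ≠ 0) (hMv : M v = 0)
    (hv₁ : inner ℝ p.1 v.1 = 0) (hv₂ : inner ℝ p.2 v.2 = 0) :
    (fderiv ℝ (sphericalPair M M) p).det = 0 := by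
  rw [(hasFDerivAt_sphericalPair M M hM hM).fderiv]
  by_contra hdet
  refine hv ((ContinuousLinearMap.toContinuousLinearEquivOfDetNeZero _ hdet).injective ?_)
  simp [hMv, inner_normalize_eq_zero hv₁, inner_normalize_eq_zero hv₂]

lemma norm_normalize_of_half_lt {v : E} (hv : 1 / 2 < ‖v‖) : ‖NormedSpace.normalize v‖ = 1 :=
  NormedSpace.norm_normalize (norm_pos_iff.1 (one_half_pos.trans hv))

lemma fderiv_sphericalPair_fst_snd {p : E × E} (h₁ : 1 / 2 < ‖p.1‖) (h₂ : 1 / 2 < ‖p.2‖) :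
    fderiv ℝ (sphericalPair Prod.fst Prod.snd) p =
      (stretch (NormedSpace.normalize p.1) (cutoffRadialDeriv p.1) (cutoff p.1 / ‖p.1‖)).prodMap
        (stretch (NormedSpace.normalize p.2) (cutoffRadialDeriv p.2) (cutoff p.2 / ‖p.2‖)) := by
  refine (hasFDerivAt_sphericalPair (.fst ℝ E E) (.snd ℝ E E) h₁ h₂).fderiv.trans ?_
  refine ContinuousLinearMap.ext fun v => Prod.ext ?_ ?_
  · change cutoff p.1 • stretch (NormedSpace.normalize p.1) 0 ‖p.1‖⁻¹ v.1 +
      (cutoffRadialDeriv p.1 * inner ℝ (NormedSpace.normalize p.1) v.1) •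
        NormedSpace.normalize p.1 = stretch _ _ _ v.1
    rw [stretch_apply, stretch_apply]
    module
  · change cutoff p.2 • stretch (NormedSpace.normalize p.2) 0 ‖p.2‖⁻¹ v.2 +
      (cutoffRadialDeriv p.2 * inner ℝ (NormedSpace.normalize p.2) v.2) •
        NormedSpace.normalize p.2 = stretch _ _ _ v.2
    rw [stretch_apply, stretch_apply]
    module

/-- The linear automorphism of `E × E` that exchanges the coordinates along the unit vectors `a`
and `b` of its two factors. -/
noncomputable def exchange (a b : E) : E × E →ₗ[ℝ] E × E :=
  LinearMap.transvection
    ((innerSL ℝ b : E →ₗ[ℝ] ℝ) ∘ₗ LinearMap.snd ℝ E E -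
      (innerSL ℝ a : E →ₗ[ℝ] ℝ) ∘ₗ LinearMap.fst ℝ E E) (a, -b)

lemma det_exchange [FiniteDimensional ℝ E] {a b : E} (ha : ‖a‖ = 1) (hb : ‖b‖ = 1) :
    LinearMap.det (exchange a b) = -1 := by
  rw [exchange, LinearMap.transvection.det]
  simp [ha, hb]

lemma exchange_apply (a b : E) (v : E × E) :
    exchange a b v = (v.1 + (inner ℝ b v.2 - inner ℝ a v.1) • a,
      v.2 - (inner ℝ b v.2 - inner ℝ a v.1) • b) := by
  ext <;> simp [exchange, LinearMap.transvection.apply, sub_eq_add_neg]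

lemma inner_exchange_fst {a : E} (ha : ‖a‖ = 1) (b : E) (v : E × E) :
    inner ℝ a (exchange a b v).1 = inner ℝ b v.2 := by
  rw [exchange_apply, inner_add_right, real_inner_smul_right, real_inner_self_eq_norm_sq, ha]
  ring

lemma inner_exchange_snd (a : E) {b : E} (hb : ‖b‖ = 1) (v : E × E) :
    inner ℝ b (exchange a b v).2 = inner ℝ a v.1 := by
  rw [exchange_apply, inner_sub_right, real_inner_smul_right, real_inner_self_eq_norm_sq, hb]
  ring

lemma fderiv_sphericalPair_snd_fst {p : E × E} (h₁ : 1 / 2 < ‖p.1‖) (h₂ : 1 / 2 < ‖p.2‖) :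
    (fderiv ℝ (sphericalPair Prod.snd Prod.fst) p : E × E →ₗ[ℝ] E × E) =
      (LinearEquiv.prodComm ℝ E E : E × E →ₗ[ℝ] E × E) ∘ₗ
        ((stretch (NormedSpace.normalize p.1) (cutoffRadialDeriv p.2) (cutoff p.2 / ‖p.1‖)
            : E →ₗ[ℝ] E).prodMap
          (stretch (NormedSpace.normalize p.2) (cutoffRadialDeriv p.1) (cutoff p.1 / ‖p.2‖)
            : E →ₗ[ℝ] E)) ∘ₗ
        exchange (NormedSpace.normalize p.1) (NormedSpace.normalize p.2) := by
  have hfderiv : fderiv ℝ (sphericalPair Prod.snd Prod.fst) p = _ :=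
    (hasFDerivAt_sphericalPair (.snd ℝ E E) (.fst ℝ E E) h₂ h₁).fderiv
  rw [hfderiv]
  refine LinearMap.ext fun v => Prod.ext ?_ ?_
  · change cutoff p.1 • stretch (NormedSpace.normalize p.2) 0 ‖p.2‖⁻¹ v.2 +
      (cutoffRadialDeriv p.1 * inner ℝ (NormedSpace.normalize p.1) v.1) •
        NormedSpace.normalize p.2 = stretch _ _ _ (exchange _ _ v).2
    rw [stretch_apply, stretch_apply, inner_exchange_snd _ (norm_normalize_of_half_lt h₂),
      exchange_apply]
    module
  · change cutoff p.2 • stretch (NormedSpace.normalize p.1) 0 ‖p.1‖⁻¹ v.1 +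
      (cutoffRadialDeriv p.2 * inner ℝ (NormedSpace.normalize p.2) v.2) •
        NormedSpace.normalize p.1 = stretch _ _ _ (exchange _ _ v).1
    rw [stretch_apply, stretch_apply, inner_exchange_fst (norm_normalize_of_half_lt h₁),
      exchange_apply]
    module

lemma exists_cutoff_pos_cutoffRadialDeriv_pos [Nontrivial E] :
    ∃ v : E, 1 < ‖v‖ ∧ 0 < cutoff v ∧ 0 < cutoffRadialDeriv v := by
  obtain ⟨t, ht, hderiv⟩ := exists_deriv_eq_slope Real.smoothTransition zero_lt_one
    Real.smoothTransition.continuous.continuousOn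
    (Real.smoothTransition.contDiff.differentiable one_ne_zero).differentiableOn
  obtain ⟨v, hv⟩ := exists_norm_eq E (Real.sqrt_nonneg (t + 2))
  have hv2 : ‖v‖ ^ 2 - 2 = t := by
    rw [hv, Real.sq_sqrt (by linarith [ht.1]), add_sub_cancel_right]
  have hv1 : 1 < ‖v‖ := one_lt_norm_of_two_le_norm_sq (by linarith [ht.1])
  refine ⟨v, hv1, ?_, ?_⟩
  · rw [cutoff, hv2]
    exact Real.smoothTransition.pos_of_pos ht.1
  · rw [cutoffRadialDeriv, hv2, hderiv, Real.smoothTransition.one, Real.smoothTransition.zero]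
    positivity

variable [FiniteDimensional ℝ E] [Nontrivial E]

lemma det_fderiv_sphericalPair_fst_snd {p : E × E} (h₁ : 1 / 2 < ‖p.1‖) (h₂ : 1 / 2 < ‖p.2‖) :
    (fderiv ℝ (sphericalPair Prod.fst Prod.snd) p).det =
      (cutoffRadialDeriv p.1 * (cutoff p.1 / ‖p.1‖) ^ (finrank ℝ E - 1)) *
        (cutoffRadialDeriv p.2 * (cutoff p.2 / ‖p.2‖) ^ (finrank ℝ E - 1)) := by
  rw [fderiv_sphericalPair_fst_snd h₁ h₂, ← det_stretch (norm_normalize_of_half_lt h₁),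
    ← det_stretch (norm_normalize_of_half_lt h₂)]
  exact LinearMap.det_prodMap _ _

lemma det_fderiv_sphericalPair_snd_fst {p : E × E} (h₁ : 1 / 2 < ‖p.1‖) (h₂ : 1 / 2 < ‖p.2‖) :
    (fderiv ℝ (sphericalPair Prod.snd Prod.fst) p).det =
      (-1) ^ (finrank ℝ E + 1) *
      ((cutoffRadialDeriv p.2 * (cutoff p.2 / ‖p.1‖) ^ (finrank ℝ E - 1)) *
        (cutoffRadialDeriv p.1 * (cutoff p.1 / ‖p.2‖) ^ (finrank ℝ E - 1))) := by
  rw [ContinuousLinearMap.det, fderiv_sphericalPair_snd_fst h₁ h₂, LinearMap.det_comp,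
    LinearMap.det_comp, det_prodComm,
    det_exchange (norm_normalize_of_half_lt h₁) (norm_normalize_of_half_lt h₂),
    LinearMap.det_prodMap, ← det_stretch (norm_normalize_of_half_lt h₁),
    ← det_stretch (norm_normalize_of_half_lt h₂)]
  simp only [ContinuousLinearMap.det]
  ring

lemma det_fderiv_sphericalPair_induction {z w : E × E → E} (hz : IsAdmissible z)
    (hw : IsAdmissible w) {P : ℝ → Prop} (h0 : P 0)
    (hP : ∀ p : E × E, 1 < ‖p.1‖ → 1 < ‖p.2‖ → P (fderiv ℝ (sphericalPair z w) p).det)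
    (p : E × E) : P (fderiv ℝ (sphericalPair z w) p).det := by
  by_cases hp : p ∈ shell E ×ˢ shell E
  · exact hP p (one_lt_norm_of_two_le_norm_sq hp.1.1) (one_lt_norm_of_two_le_norm_sq hp.2.1)
  · rwa [det_fderiv_sphericalPair_eq_zero hz hw hp]

variable [MeasurableSpace (E × E)] (μ : Measure (E × E))

lemma jacobianIntegral_fst_fst_eq_zero (hE : 1 < finrank ℝ E) :
    jacobianIntegral μ (Prod.fst : E × E → E) Prod.fst = 0 :=
  integral_eq_zero_of_ae <| .of_forall <|
    det_fderiv_sphericalPair_induction (P := (· = 0)) isAdmissible_fst isAdmissible_fst rfl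
    fun p h₁ _ => by
      obtain ⟨u, hu, hpu⟩ := exists_ne_zero_inner_eq_zero hE p.2
      exact det_fderiv_sphericalPair_self_eq_zero (M := .fst ℝ E E) (v := (0, u))
        (by simpa using by linarith) (by simpa using hu) rfl (inner_zero_right _) hpu

lemma jacobianIntegral_snd_snd_eq_zero (hE : 1 < finrank ℝ E) :
    jacobianIntegral μ (Prod.snd : E × E → E) Prod.snd = 0 :=
  integral_eq_zero_of_ae <| .of_forall <|
    det_fderiv_sphericalPair_induction (P := (· = 0)) isAdmissible_snd isAdmissible_snd rfl
    fun p _ h₂ => by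
      obtain ⟨u, hu, hpu⟩ := exists_ne_zero_inner_eq_zero hE p.1
      exact det_fderiv_sphericalPair_self_eq_zero (M := .snd ℝ E E) (v := (u, 0))
        (by simpa using by linarith) (by simpa using hu) rfl hpu (inner_zero_right _)

lemma jacobianIntegral_snd_fst_nonneg (hE : Odd (finrank ℝ E)) :
    0 ≤ jacobianIntegral μ (Prod.snd : E × E → E) Prod.fst :=
  integral_nonneg <|
    det_fderiv_sphericalPair_induction isAdmissible_snd isAdmissible_fst le_rfl fun p h₁ h₂ => by
      have := cutoffRadialDeriv_nonneg p.1
      have := cutoffRadialDeriv_nonneg p.2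
      have := cutoff_nonneg p.1
      have := cutoff_nonneg p.2
      rw [det_fderiv_sphericalPair_snd_fst (by linarith) (by linarith), hE.add_one.neg_one_pow]
      positivity

lemma jacobianIntegral_fst_snd_pos [BorelSpace (E × E)] [μ.IsAddHaarMeasure] :
    0 < jacobianIntegral μ (Prod.fst : E × E → E) Prod.snd := by
  obtain ⟨v, hv, hcutoff, hderiv⟩ := exists_cutoff_pos_cutoffRadialDeriv_pos (E := E)
  refine (continuous_det_fderiv (contDiff_sphericalPair contDiff_fst contDiff_snd)
    ).integral_pos_of_hasCompactSupport_nonneg_nonzero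
      (hasCompactSupport_det_fderiv_sphericalPair isAdmissible_fst isAdmissible_snd)
      (det_fderiv_sphericalPair_induction isAdmissible_fst isAdmissible_snd le_rfl
        fun p h₁ h₂ => ?_)
      (x := (v, v)) ?_
  · have := cutoffRadialDeriv_nonneg p.1
    have := cutoffRadialDeriv_nonneg p.2
    have := cutoff_nonneg p.1
    have := cutoff_nonneg p.2
    rw [det_fderiv_sphericalPair_fst_snd (by linarith) (by linarith)]
    positivity
  · rw [det_fderiv_sphericalPair_fst_snd (p := (v, v)) (by linarith) (by linarith)]
    positivity

end Evaluation

section Deformation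

lemma exists_continuous_deformation {W F : Type*} [TopologicalSpace W] [LocallyCompactSpace W]
    [T2Space W] [NormedAddCommGroup F] {f₀ f₁ : W → F} (hf₀ : Continuous f₀) {K U : Set W}
    (hK : IsCompact K) (hU : IsOpen U) (hKU : K ⊆ U) {H : W × I → F}
    (hH : ContinuousOn H (U ×ˢ univ)) (hH₀ : ∀ p ∈ U, H (p, 0) = f₀ p)
    (hH₁ : ∀ p ∈ U, H (p, 1) = f₁ p) :
    ∃ h : W → F, Continuous h ∧ HasCompactSupport (h - f₀) ∧ tsupport (h - f₀) ⊆ U ∧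
      EqOn h f₁ K ∧ ∀ p ∈ U, ∃ t, h p = H (p, t) := by
  classical
  obtain ⟨L, hL, hKL, hLU⟩ := exists_compact_between hK hU hKU
  obtain ⟨θ, hθ₀, hθ₁, hθ⟩ := exists_continuous_zero_one_of_isCompact' hK
    isOpen_interior.isClosed_compl (disjoint_compl_right_iff_subset.2 hKL)
  let τ : W → I := fun p => ⟨θ p, hθ p⟩
  let h : W → F := fun p => if p ∈ U then H (p, τ p) else f₀ p
  have hhU {p : W} (hp : p ∈ U) : h p = H (p, τ p) := if_pos hp
  have hhL {p : W} (hp : p ∉ L) : h p = f₀ p := by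
    have hτ : τ p = 0 := Subtype.ext (hθ₀ fun hp' => hp (interior_subset hp'))
    by_cases hpU : p ∈ U
    · rw [hhU hpU, hτ, hH₀ p hpU]
    · exact if_neg hpU
  have htsupport : tsupport (h - f₀) ⊆ L :=
    closure_minimal (fun p hp => not_not.1 fun hpL => hp (sub_eq_zero.2 (hhL hpL))) hL.isClosed
  refine ⟨h, continuous_iff_continuousAt.2 fun p => ?_, hL.of_isClosed_subset
    (isClosed_tsupport _) htsupport, htsupport.trans hLU, fun p hp => ?_, fun p hp => ⟨_, hhU hp⟩⟩
  · by_cases hp : p ∈ U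
    · have hcomp : ContinuousAt (fun q => H (q, τ q)) p :=
        (hH.continuousAt ((hU.prod isOpen_univ).mem_nhds ⟨hp, mem_univ _⟩)).comp
          (f := fun q => (q, τ q)) (continuous_id.prodMk (θ.continuous.subtype_mk hθ)).continuousAt
      exact hcomp.congr ((hU.eventually_mem hp).mono fun q hq => (hhU hq).symm)
    · exact hf₀.continuousAt.congr <|
        (hL.isClosed.isOpen_compl.eventually_mem fun hpL => hp (hLU hpL)).mono
          fun q hq => (hhL hq).symm
  · rw [hhU (hKU hp), show τ p = 1 from Subtype.ext (hθ₁ hp), hH₁ p (hKU hp)]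

lemma exists_contDiff_deformation {W F : Type*} [NormedAddCommGroup W] [NormedSpace ℝ W]
    [FiniteDimensional ℝ W] [NormedAddCommGroup F] [NormedSpace ℝ F] {f₀ f₁ : W → F}
    (hf₀ : ContDiff ℝ 1 f₀) (hf₁ : ContDiff ℝ 1 f₁) {K U : Set W} (hK : IsCompact K)
    (hU : IsOpen U) (hKU : K ⊆ U) {H : W × I → F} (hH : ContinuousOn H (U ×ˢ univ))
    (hH₀ : ∀ p ∈ U, H (p, 0) = f₀ p) (hH₁ : ∀ p ∈ U, H (p, 1) = f₁ p) {ε : ℝ} (hε : 0 < ε) :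
    ∃ g : W → F, ContDiff ℝ 1 g ∧ HasCompactSupport (g - f₀) ∧ tsupport (g - f₀) ⊆ U ∧
      g =ᶠ[𝓝ˢ K] f₁ ∧ ∀ p ∈ U, ∃ t, dist (g p) (H (p, t)) < ε := by
  have := FiniteDimensional.proper ℝ W
  obtain ⟨L, hL, hKL, hLU⟩ := exists_compact_between hK hU hKU
  obtain ⟨M, hM, hLM, hMU⟩ := exists_compact_between hL hU hLU
  obtain ⟨h, hcont, hcompact, hsupp, hhM, hhH⟩ :=
    exists_continuous_deformation hf₀.continuous hM hU hMU hH hH₀ hH₁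
  obtain ⟨N, hN, hsuppN, hNU⟩ := exists_compact_between hcompact hU hsupp
  have hh₀ {p : W} (hp : p ∉ tsupport (h - f₀)) : h p = f₀ p :=
    sub_eq_zero.1 (image_eq_zero_of_notMem_tsupport (f := h - f₀) hp)
  have hsmooth : ContDiffOn ℝ 1 h (interior M ∪ (tsupport (h - f₀))ᶜ) := by
    refine fun p hp => ContDiffAt.contDiffWithinAt ?_
    rcases hp with hp | hp
    · exact hf₁.contDiffAt.congr_of_eventuallyEq
        ((isOpen_interior.eventually_mem hp).mono fun q hq => hhM (interior_subset hq))
    · exact hf₀.contDiffAt.congr_of_eventuallyEq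
        (((isClosed_tsupport _).isOpen_compl.eventually_mem hp).mono fun q hq => hh₀ hq)
  obtain ⟨g, hg, hgh, hgeq, -⟩ := hcont.exists_contDiff_approx_and_eqOn 1
    (ε := fun _ => ε) continuous_const (fun _ => hε)
    (hL.isClosed.union (isOpen_interior (s := N)).isClosed_compl)
    ((isOpen_interior.union (isClosed_tsupport _).isOpen_compl).mem_nhdsSet.2
      (union_subset_union hLM (compl_subset_compl.2 hsuppN))) hsmooth
  have htsupport : tsupport (g - f₀) ⊆ N := closure_minimal (fun p hp => not_not.1 fun hpN =>
    hp (sub_eq_zero.2 ((hgeq (.inr fun hp' => hpN (interior_subset hp'))).trans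
      (hh₀ fun hp' => hpN (interior_subset (hsuppN hp')))))) hN.isClosed
  refine ⟨g, hg, hN.of_isClosed_subset (isClosed_tsupport _) htsupport, htsupport.trans hNU, ?_,
    fun p hp => ?_⟩
  · filter_upwards [subset_interior_iff_mem_nhdsSet.1 hKL] with p hp
    rw [hgeq (.inl hp), hhM (interior_subset (hLM hp))]
  · obtain ⟨t, ht⟩ := hhH p hp
    exact ⟨t, ht ▸ hgh p⟩

end Deformation

section MotionPlanner

section SphereProjection

variable {E : Type*} [NormedAddCommGroup E] [NormedSpace ℝ E]

open Classical in
/-- The radial projection of a normed space onto its unit sphere, with the junk value `e` at the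
origin. -/
noncomputable def sphereProj (e : Metric.sphere (0 : E) 1) (v : E) : Metric.sphere (0 : E) 1 :=
  if hv : v = 0 then e
  else ⟨NormedSpace.normalize v, mem_sphere_zero_iff_norm.2 (NormedSpace.norm_normalize hv)⟩

lemma coe_sphereProj (e : Metric.sphere (0 : E) 1) {v : E} (hv : v ≠ 0) :
    (sphereProj e v : E) = NormedSpace.normalize v := by
  rw [sphereProj, dif_neg hv]

lemma continuousAt_sphereProj (e : Metric.sphere (0 : E) 1) {v : E} (hv : v ≠ 0) :
    ContinuousAt (sphereProj e) v := by
  refine IsInducing.subtypeVal.continuousAt_iff.2 ?_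
  have hnormalize : ContinuousAt (NormedSpace.normalize : E → E) v :=
    (continuousAt_id.norm.inv₀ (norm_ne_zero_iff.2 hv)).smul continuousAt_id
  exact hnormalize.congr ((eventually_ne_nhds hv).mono fun u hu => (coe_sphereProj e hu).symm)

/-- The pairs of nonzero vectors whose pair of directions belongs to `O`. -/
def directionCone (e : Metric.sphere (0 : E) 1)
    (O : Set (Metric.sphere (0 : E) 1 × Metric.sphere (0 : E) 1)) : Set (E × E) :=
  {p | p.1 ≠ 0 ∧ p.2 ≠ 0 ∧ (sphereProj e p.1, sphereProj e p.2) ∈ O}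

lemma continuousAt_sphereProj_prodMk (e : Metric.sphere (0 : E) 1) {p : E × E} (h₁ : p.1 ≠ 0)
    (h₂ : p.2 ≠ 0) : ContinuousAt (fun p : E × E => (sphereProj e p.1, sphereProj e p.2)) p :=
  ((continuousAt_sphereProj e h₁).comp continuousAt_fst).prodMk
    ((continuousAt_sphereProj e h₂).comp continuousAt_snd)

lemma isOpen_directionCone (e : Metric.sphere (0 : E) 1)
    {O : Set (Metric.sphere (0 : E) 1 × Metric.sphere (0 : E) 1)} (hO : IsOpen O) :
    IsOpen (directionCone e O) := by
  refine isOpen_iff_mem_nhds.2 fun p ⟨h₁, h₂, hpO⟩ => ?_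
  filter_upwards [continuousAt_fst.eventually_ne h₁, continuousAt_snd.eventually_ne h₂,
    (continuousAt_sphereProj_prodMk e h₁ h₂).eventually (hO.mem_nhds hpO)] with q hq₁ hq₂ hqO
  exact ⟨hq₁, hq₂, hqO⟩

/-- The motion from `p.1` to `p.2` that moves the directions along the path `s` and interpolates
the norms linearly. -/
noncomputable def radialMotion (e : Metric.sphere (0 : E) 1)
    (s : Metric.sphere (0 : E) 1 × Metric.sphere (0 : E) 1 → C(I, Metric.sphere (0 : E) 1))
    (q : (E × E) × I) : E :=
  (AffineMap.lineMap ‖q.1.1‖ ‖q.1.2‖ (q.2 : ℝ) : ℝ) •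
    (s (sphereProj e q.1.1, sphereProj e q.1.2) q.2 : E)

variable {e : Metric.sphere (0 : E) 1}
  {O : Set (Metric.sphere (0 : E) 1 × Metric.sphere (0 : E) 1)}
  {s : Metric.sphere (0 : E) 1 × Metric.sphere (0 : E) 1 → C(I, Metric.sphere (0 : E) 1)}

lemma continuousOn_radialMotion (hs : ContinuousOn s O) :
    ContinuousOn (radialMotion e s) (directionCone e O ×ˢ univ) := by
  have hdirections : ContinuousOn
      (fun q : (E × E) × I => (sphereProj e q.1.1, sphereProj e q.1.2))
      (directionCone e O ×ˢ univ) := fun q hq =>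
    ((continuousAt_sphereProj_prodMk e hq.1.1 hq.1.2.1).comp continuousAt_fst).continuousWithinAt
  have hpath : ContinuousOn
      (fun q : (E × E) × I => s (sphereProj e q.1.1, sphereProj e q.1.2) q.2)
      (directionCone e O ×ˢ univ) :=
    continuous_eval.comp_continuousOn
      ((hs.comp hdirections fun q hq => hq.1.2.2).prodMk continuousOn_snd)
  have hnorm : Continuous fun q : (E × E) × I =>
      (AffineMap.lineMap ‖q.1.1‖ ‖q.1.2‖ (q.2 : ℝ) : ℝ) := by
    simp only [AffineMap.lineMap_apply_ring']
    fun_prop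
  exact hnorm.continuousOn.smul (continuous_subtype_val.comp_continuousOn hpath)

lemma radialMotion_zero (hs : ∀ p ∈ O, s p 0 = p.1) {p : E × E} (hp : p ∈ directionCone e O) :
    radialMotion e s (p, 0) = p.1 := by
  simp [radialMotion, hs _ hp.2.2, coe_sphereProj e hp.1]

lemma radialMotion_one (hs : ∀ p ∈ O, s p 1 = p.2) {p : E × E} (hp : p ∈ directionCone e O) :
    radialMotion e s (p, 1) = p.2 := by
  simp [radialMotion, hs _ hp.2.2, coe_sphereProj e hp.2.1]

lemma one_le_norm_radialMotion {p : E × E} (h₁ : 1 ≤ ‖p.1‖) (h₂ : 1 ≤ ‖p.2‖) (t : I) :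
    1 ≤ ‖radialMotion e s (p, t)‖ := by
  have hinterp : (1 : ℝ) ≤ AffineMap.lineMap ‖p.1‖ ‖p.2‖ (t : ℝ) := by
    rw [AffineMap.lineMap_apply_ring]
    nlinarith [t.2.1, t.2.2]
  rw [radialMotion, norm_smul, mem_sphere_zero_iff_norm.1 (s _ t).2, mul_one]
  exact hinterp.trans (le_abs_self _)

lemma exists_isAdmissible_eventuallyEq_snd [FiniteDimensional ℝ E] (hO : IsOpen O)
    (hs : ContinuousOn s O) (hs' : ∀ p ∈ O, s p 0 = p.1 ∧ s p 1 = p.2) {K : Set (E × E)}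
    (hK : IsCompact K) (hKO : K ⊆ directionCone e O) :
    ∃ g : E × E → E, IsAdmissible g ∧ HasCompactSupport (g - Prod.fst) ∧
      g =ᶠ[𝓝ˢ K] Prod.snd := by
  obtain ⟨g, hg, hcompact, hsupp, hgK, hdist⟩ := exists_contDiff_deformation contDiff_fst
    contDiff_snd hK (isOpen_directionCone e hO) hKO (continuousOn_radialMotion hs)
    (fun p => radialMotion_zero fun q hq => (hs' q hq).1)
    (fun p => radialMotion_one fun q hq => (hs' q hq).2) one_half_pos
  refine ⟨g, ⟨hg, fun p h₁ h₂ => ?_⟩, hcompact, hgK⟩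
  by_cases hp : p ∈ directionCone e O
  · obtain ⟨t, ht⟩ := hdist p hp
    have hle := one_le_norm_radialMotion (e := e) (s := s) h₁ h₂ t
    rw [dist_comm, dist_eq_norm] at ht
    linarith [norm_le_norm_add_norm_sub' (radialMotion e s (p, t)) (g p)]
  · have hgp : g p = p.1 := sub_eq_zero.1
      (image_eq_zero_of_notMem_tsupport (f := g - Prod.fst) fun hp' => hp (hsupp hp'))
    rw [hgp]
    linarith

end SphereProjection

section LowerBound

variable {E : Type*} [NormedAddCommGroup E] [InnerProductSpace ℝ E] [FiniteDimensional ℝ E]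

lemma exists_isAdmissible_pair_of_TCcover_two [Nontrivial E]
    (h : TCcover (Metric.sphere (0 : E) 1) 2) :
    ∃ g₀ g₁ : E × E → E, (IsAdmissible g₀ ∧ HasCompactSupport (g₀ - Prod.fst)) ∧
      (IsAdmissible g₁ ∧ HasCompactSupport (g₁ - Prod.fst)) ∧
      ∀ p ∈ shell E ×ˢ shell E, g₀ =ᶠ[𝓝 p] Prod.snd ∨ g₁ =ᶠ[𝓝 p] Prod.snd := by
  obtain ⟨U, hU, hcover, hplanner⟩ := h
  choose s hs hs' using hplanner
  obtain ⟨e⟩ := (NormedSpace.sphere_nonempty (E := E) (x := 0)).2 zero_le_one |>.to_subtype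
  have hshell : shell E ×ˢ shell E ⊆ directionCone e (U 0) ∪ directionCone e (U 1) := by
    intro p hp
    have hne {v : E} (hv : v ∈ shell E) : v ≠ 0 :=
      norm_pos_iff.1 (zero_lt_one.trans (one_lt_norm_of_two_le_norm_sq hv.1))
    have hpU : (sphereProj e p.1, sphereProj e p.2) ∈ ⋃ i, U i := hcover ▸ mem_univ _
    obtain ⟨i, hi⟩ := mem_iUnion.1 hpU
    fin_cases i
    exacts [.inl ⟨hne hp.1, hne hp.2, hi⟩, .inr ⟨hne hp.1, hne hp.2, hi⟩]
  obtain ⟨K₀, K₁, hK₀, hK₁, hKU₀, hKU₁, hK⟩ := (isCompact_shell.prod isCompact_shell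
    ).binary_compact_cover (isOpen_directionCone e (hU 0)) (isOpen_directionCone e (hU 1)) hshell
  obtain ⟨g₀, hg₀, hcompact₀, hsnd₀⟩ :=
    exists_isAdmissible_eventuallyEq_snd (hU 0) (hs 0) (hs' 0) hK₀ hKU₀
  obtain ⟨g₁, hg₁, hcompact₁, hsnd₁⟩ :=
    exists_isAdmissible_eventuallyEq_snd (hU 1) (hs 1) (hs' 1) hK₁ hKU₁
  refine ⟨g₀, g₁, ⟨hg₀, hcompact₀⟩, ⟨hg₁, hcompact₁⟩, fun p hp => ?_⟩
  rw [hK] at hp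
  exact hp.imp (fun hp => hsnd₀.filter_mono (nhds_le_nhdsSet hp))
    fun hp => hsnd₁.filter_mono (nhds_le_nhdsSet hp)

/-- The vanishing of the product `(g₀ - y) * (g₁ - y)`, written out without subtraction. -/
lemma det_fderiv_sphericalPair_add [Nontrivial E] {g₀ g₁ y : E × E → E} (hg₀ : IsAdmissible g₀)
    (hg₁ : IsAdmissible g₁) (hy : IsAdmissible y)
    (h : ∀ p ∈ shell E ×ˢ shell E, g₀ =ᶠ[𝓝 p] y ∨ g₁ =ᶠ[𝓝 p] y) (p : E × E) :
    (fderiv ℝ (sphericalPair g₀ g₁) p).det + (fderiv ℝ (sphericalPair y y) p).det =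
      (fderiv ℝ (sphericalPair g₀ y) p).det + (fderiv ℝ (sphericalPair y g₁) p).det := by
  by_cases hp : p ∈ shell E ×ˢ shell E
  · rcases h p hp with h₀ | h₁
    · rw [(sphericalPair_eventuallyEq h₀ .rfl).fderiv_eq,
        (sphericalPair_eventuallyEq (w := y) h₀ .rfl).fderiv_eq, add_comm]
    · rw [(sphericalPair_eventuallyEq .rfl h₁).fderiv_eq,
        (sphericalPair_eventuallyEq (z := y) .rfl h₁).fderiv_eq]
  · simp only [det_fderiv_sphericalPair_eq_zero, hg₀, hg₁, hy, hp, not_false_eq_true]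

lemma jacobianIntegral_add [Nontrivial E] [MeasurableSpace (E × E)] [BorelSpace (E × E)]
    (μ : Measure (E × E)) [μ.IsAddHaarMeasure] {g₀ g₁ y : E × E → E} (hg₀ : IsAdmissible g₀)
    (hg₁ : IsAdmissible g₁) (hy : IsAdmissible y)
    (h : ∀ p ∈ shell E ×ˢ shell E, g₀ =ᶠ[𝓝 p] y ∨ g₁ =ᶠ[𝓝 p] y) :
    jacobianIntegral μ g₀ g₁ + jacobianIntegral μ y y =
      jacobianIntegral μ g₀ y + jacobianIntegral μ y g₁ := by
  simp only [jacobianIntegral]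
  rw [← integral_add (integrable_det_fderiv_sphericalPair μ hg₀ hg₁)
      (integrable_det_fderiv_sphericalPair μ hy hy),
    ← integral_add (integrable_det_fderiv_sphericalPair μ hg₀ hy)
      (integrable_det_fderiv_sphericalPair μ hy hg₁)]
  exact integral_congr_ae (.of_forall (det_fderiv_sphericalPair_add hg₀ hg₁ hy h))

theorem not_TCcover_sphere_two (hE : 1 < finrank ℝ E) (hodd : Odd (finrank ℝ E)) :
    ¬ TCcover (Metric.sphere (0 : E) 1) 2 := by
  intro hcover
  have : Nontrivial E := nontrivial_of_finrank_pos (zero_lt_one.trans hE)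
  obtain ⟨g₀, g₁, ⟨hg₀, hfst₀⟩, ⟨hg₁, hfst₁⟩, hsnd⟩ :=
    exists_isAdmissible_pair_of_TCcover_two hcover
  borelize (E × E)
  let μ : Measure (E × E) := Measure.addHaar
  have hsubself (z : E × E → E) : HasCompactSupport (z - z) := by
    rw [sub_self]
    exact .zero
  have hadd := jacobianIntegral_add μ hg₀ hg₁ isAdmissible_snd hsnd
  rw [jacobianIntegral_congr μ hg₀ isAdmissible_fst hg₁ isAdmissible_fst hfst₀ hfst₁,
    jacobianIntegral_congr μ hg₀ isAdmissible_fst isAdmissible_snd isAdmissible_snd hfst₀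
      (hsubself _),
    jacobianIntegral_congr μ isAdmissible_snd isAdmissible_snd hg₁ isAdmissible_fst
      (hsubself _) hfst₁,
    jacobianIntegral_fst_fst_eq_zero μ hE, jacobianIntegral_snd_snd_eq_zero μ hE] at hadd
  linarith [jacobianIntegral_fst_snd_pos μ, jacobianIntegral_snd_fst_nonneg μ hodd]

end LowerBound

end MotionPlanner

section Transfer

variable {G X : Type*} [TopologicalSpace X] {act : G → X → X}

lemma eqTCcover.of_surjective {k l : ℕ} {f : Fin l → Fin k} (hf : Function.Surjective f)
    (h : eqTCcover act k) : eqTCcover act l := by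
  obtain ⟨U, hU, hcover, hplanner⟩ := h
  exact ⟨U ∘ f, fun i => hU (f i), (hf.iUnion_comp U).trans hcover, fun i => hplanner (f i)⟩

lemma eqTCcover.mono {k l : ℕ} (hk : 0 < k) (hkl : k ≤ l) (h : eqTCcover act k) :
    eqTCcover act l := by
  have : Nonempty (Fin k) := ⟨⟨0, hk⟩⟩
  exact h.of_surjective (Function.invFun_surjective (Fin.castLE_injective hkl))

lemma eqTC_eq_add_one {k : ℕ} (h : eqTCcover act (k + 1)) (hk : ¬ eqTCcover act k) :
    eqTC act = k + 1 := by
  refine le_antisymm (sInf_le ⟨k + 1, by norm_cast, Nat.le_add_left 1 k, h⟩) (le_sInf ?_)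
  rintro _ ⟨m, rfl, hm, hmcover⟩
  have hkm : k < m := lt_of_not_ge fun hmk => hk (hmcover.mono hm hmk)
  exact_mod_cast hkm

lemma TCcover_of_eqTCcover {k : ℕ} (h : eqTCcover act k) : TCcover X k := by
  obtain ⟨U, hU, hcover, hplanner⟩ := h
  exact ⟨U, hU, hcover, fun i => have ⟨_, s, hs, hs', _⟩ := hplanner i; ⟨s, hs, hs'⟩⟩

lemma exists_continuousMap_lift {Y Z : Type*} [TopologicalSpace Y] [TopologicalSpace Z] {ι : Y → X}
    (hι : IsInducing ι) (f : C(Z, X)) (hf : ∀ z, f z ∈ range ι) :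
    ∃ c : C(Z, Y), ∀ z, ι (c z) = f z := by
  choose c hc using hf
  exact ⟨⟨c, hι.continuous_iff.2 (f.continuous.congr fun z => (hc z).symm)⟩, hc⟩

lemma TCcover_of_eqTCcover_of_range_eq_fixedSet {Y : Type*} [TopologicalSpace Y] {ι : Y → X}
    (hι : IsEmbedding ι) (hrange : range ι = fixedSet act) {k : ℕ} (h : eqTCcover act k) :
    TCcover Y k := by
  obtain ⟨U, hU, hcover, hplanner⟩ := h
  have hιι : Continuous (Prod.map ι ι) := hι.continuous.prodMap hι.continuous
  refine ⟨fun i => Prod.map ι ι ⁻¹' U i, fun i => (hU i).preimage hιι, ?_, fun i => ?_⟩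
  · rw [← preimage_iUnion, hcover, preimage_univ]
  obtain ⟨-, s, hs, hs', hequiv⟩ := hplanner i
  have hfixed (y : Y) : ι y ∈ fixedSet act := hrange ▸ mem_range_self y
  have hlift (p : Y × Y) : ∃ c : C(I, Y), Prod.map ι ι p ∈ U i →
      ∀ t, ι (c t) = s (Prod.map ι ι p) t := by
    by_cases hp : Prod.map ι ι p ∈ U i
    · obtain ⟨c, hc⟩ := exists_continuousMap_lift hι.isInducing (s (Prod.map ι ι p)) fun t => by
        rw [hrange]
        intro g
        rw [← hequiv g _ hp, Prod.map_fst, Prod.map_snd, hfixed, hfixed]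
        rfl
      exact ⟨c, fun _ => hc⟩
    · exact ⟨.const I p.1, fun hp' => absurd hp' hp⟩
  choose c hc using hlift
  refine ⟨c, ?_, fun p hp => ⟨hι.injective ?_, hι.injective ?_⟩⟩
  · refine ((ContinuousMap.isInducing_postcomp (X := I) ⟨ι, hι.continuous⟩
      hι.isInducing).continuousOn_iff).2 ?_
    exact (hs.comp hιι.continuousOn fun p hp => hp).congr fun p hp =>
      ContinuousMap.ext (hc p hp)
  · rw [hc p hp, (hs' _ hp).1, Prod.map_fst]
  · rw [hc p hp, (hs' _ hp).2, Prod.map_snd]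

end Transfer

section UpperBound

/-- The property required of the members of the covers counted by `eqTCcover`: an invariant set
that carries an equivariant motion planner. -/
def HasEquivariantPlanner {G X : Type*} [TopologicalSpace X] (act : G → X → X)
    (U : Set (X × X)) : Prop :=
  (∀ g p, p ∈ U → (act g p.1, act g p.2) ∈ U) ∧
    ∃ s : X × X → C(I, X),
      ContinuousOn s U ∧
      (∀ p ∈ U, s p 0 = p.1 ∧ s p 1 = p.2) ∧
      (∀ g p, p ∈ U → ∀ t : I, s (act g p.1, act g p.2) t = act g (s p t))

lemma hasEquivariantPlanner_of_continuousOn {G X : Type*} [TopologicalSpace X]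
    {act : G → X → X} {U : Set (X × X)} (hU : ∀ g p, p ∈ U → (act g p.1, act g p.2) ∈ U)
    {F : (X × X) × I → X} (hF : ContinuousOn F (U ×ˢ univ))
    (hF' : ∀ p ∈ U, F (p, 0) = p.1 ∧ F (p, 1) = p.2)
    (hFact : ∀ g p, p ∈ U → ∀ t, F ((act g p.1, act g p.2), t) = act g (F (p, t))) :
    HasEquivariantPlanner act U := by
  classical
  have hcont : Continuous fun q : U × I => F (q.1, q.2) :=
    hF.comp_continuous (by fun_prop) fun q => ⟨q.1.2, mem_univ _⟩
  let c : C(U, C(I, X)) := ContinuousMap.curry ⟨_, hcont⟩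
  let s : X × X → C(I, X) := fun p => if hp : p ∈ U then c ⟨p, hp⟩ else .const I p.1
  have hs {p : X × X} (hp : p ∈ U) (t : I) : s p t = F (p, t) := by
    simp only [s, dif_pos hp]
    rfl
  refine ⟨hU, s, ?_, fun p hp => ?_, fun g p hp t => ?_⟩
  · rw [continuousOn_iff_continuous_domRestrict]
    exact c.continuous.congr fun p => ContinuousMap.ext fun t => (hs p.2 t).symm
  · rw [hs hp, hs hp]
    exact hF' p hp
  · rw [hs hp, hs (hU g p hp)]
    exact hFact g p hp t

lemma smul_add_smul_ne_zero {E : Type*} [NormedAddCommGroup E] [NormedSpace ℝ E]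
    {x y : Metric.sphere (0 : E) 1} (hxy : y ≠ -x) {a b : ℝ} (ha : 0 ≤ a) (hb : 0 ≤ b)
    (hab : a + b = 1) : a • (x : E) + b • (y : E) ≠ 0 := by
  intro h
  have hsmul : b • (y : E) = -(a • (x : E)) := eq_neg_of_add_eq_zero_right h
  have hba : b = a := by
    have hnorm := congrArg norm hsmul
    rwa [norm_neg, norm_smul, norm_smul, norm_eq_of_mem_sphere, norm_eq_of_mem_sphere, mul_one,
      mul_one, Real.norm_of_nonneg ha, Real.norm_of_nonneg hb] at hnorm
  have hb0 : b ≠ 0 := by linarith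
  rw [← hba, ← smul_neg] at hsmul
  exact hxy (Subtype.ext (smul_right_injective E hb0 hsmul))

variable {G : Type*} [Monoid G] {n : ℕ}
  {ρ : G →* (EuclideanSpace ℝ (Fin (n + 1)) ≃ₗᵢ[ℝ] EuclideanSpace ℝ (Fin (n + 1)))}

lemma coe_sphereAct (g : G) (x : Sph n) :
    (sphereAct ρ g x : EuclideanSpace ℝ (Fin (n + 1))) = ρ g x := rfl

lemma sphereAct_neg (g : G) (x : Sph n) : sphereAct ρ g (-x) = -sphereAct ρ g x :=
  Subtype.ext (map_neg (ρ g) (x : EuclideanSpace ℝ (Fin (n + 1))))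

lemma sphereAct_injective (g : G) : Function.Injective (sphereAct ρ g) := fun _ _ hxy =>
  Subtype.ext ((ρ g).injective (congrArg Subtype.val hxy))

lemma sphereAct_sphereProj (g : G) (e : Sph n) {v : EuclideanSpace ℝ (Fin (n + 1))}
    (hv : v ≠ 0) : sphereAct ρ g (sphereProj e v) = sphereProj e (ρ g v) := by
  refine Subtype.ext ?_
  have hρv : ρ g v ≠ 0 := (map_ne_zero_iff _ (ρ g).injective).2 hv
  rw [coe_sphereAct, coe_sphereProj e hv, coe_sphereProj e hρv, NormedSpace.normalize,
    NormedSpace.normalize, map_smul, (ρ g).norm_map]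

lemma sphereProj_coe (e x : Sph n) : sphereProj e (x : EuclideanSpace ℝ (Fin (n + 1))) = x := by
  refine Subtype.ext ?_
  rw [coe_sphereProj e (ne_zero_of_mem_unit_sphere x),
    NormedSpace.normalize_eq_self_of_norm_eq_one (norm_eq_of_mem_sphere x)]

lemma hasEquivariantPlanner_of_ne_zero {U : Set (Sph n × Sph n)}
    (hU : ∀ g p, p ∈ U → (sphereAct ρ g p.1, sphereAct ρ g p.2) ∈ U)
    {w : (Sph n × Sph n) × I → EuclideanSpace ℝ (Fin (n + 1))} (hw : Continuous w)
    (hne : ∀ p ∈ U, ∀ t, w (p, t) ≠ 0) (h₀ : ∀ p, w (p, 0) = p.1) (h₁ : ∀ p, w (p, 1) = p.2)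
    (hact : ∀ g p t, w ((sphereAct ρ g p.1, sphereAct ρ g p.2), t) = ρ g (w (p, t))) :
    HasEquivariantPlanner (sphereAct ρ) U := by
  obtain ⟨e⟩ := (NormedSpace.sphere_nonempty (E := EuclideanSpace ℝ (Fin (n + 1)))
    (x := 0)).2 zero_le_one |>.to_subtype
  refine hasEquivariantPlanner_of_continuousOn hU (F := fun q => sphereProj e (w q))
    (fun q hq => ?_) (fun p _ => ?_) fun g p hp t => ?_
  · exact (ContinuousAt.comp (continuousAt_sphereProj e (hne q.1 hq.1 q.2))
      hw.continuousAt).continuousWithinAt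
  · rw [h₀, h₁]
    exact ⟨sphereProj_coe e p.1, sphereProj_coe e p.2⟩
  · rw [hact, sphereAct_sphereProj g e (hne p hp t)]

lemma hasEquivariantPlanner_not_antipodal :
    HasEquivariantPlanner (sphereAct ρ) {p | p.2 ≠ -p.1} := by
  refine hasEquivariantPlanner_of_ne_zero (fun g p hp hp' => ?_)
    (w := fun q => (1 - (q.2 : ℝ)) • (q.1.1 : EuclideanSpace ℝ (Fin (n + 1))) +
      (q.2 : ℝ) • (q.1.2 : EuclideanSpace ℝ (Fin (n + 1)))) (by fun_prop)
    (fun p hp t => smul_add_smul_ne_zero hp (sub_nonneg.2 t.2.2) t.2.1 (sub_add_cancel _ _))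
    (fun p => by simp) (fun p => by simp) fun g p t => by
      simp only [coe_sphereAct, map_add, map_smul]
  rw [← sphereAct_neg] at hp'
  exact hp (sphereAct_injective g hp')

lemma hasEquivariantPlanner_ne_neg {e : Sph n} (he : e ∈ fixedSet (sphereAct ρ)) :
    HasEquivariantPlanner (sphereAct ρ) {p | p.1 ≠ -e ∧ p.2 ≠ -e} := by
  have hact_ne (g : G) {x : Sph n} (hx : x ≠ -e) : sphereAct ρ g x ≠ -e := by
    rw [← he g, ← sphereAct_neg]
    exact (sphereAct_injective g).ne hx
  have hρe (g : G) : ρ g e = (e : EuclideanSpace ℝ (Fin (n + 1))) := congrArg Subtype.val (he g)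
  -- The segment from `p.1` to `e` followed by the segment from `e` to `p.2`.
  let w : (Sph n × Sph n) × I → EuclideanSpace ℝ (Fin (n + 1)) := fun q =>
    max (1 - 2 * (q.2 : ℝ)) 0 • (q.1.1 : EuclideanSpace ℝ (Fin (n + 1))) +
      (1 - |2 * (q.2 : ℝ) - 1|) • (e : EuclideanSpace ℝ (Fin (n + 1))) +
      max (2 * (q.2 : ℝ) - 1) 0 • (q.1.2 : EuclideanSpace ℝ (Fin (n + 1)))
  refine hasEquivariantPlanner_of_ne_zero (w := w)
    (fun g p hp => ⟨hact_ne g hp.1, hact_ne g hp.2⟩) (by fun_prop) (fun p hp t => ?_)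
    (fun p => by norm_num [w]) (fun p => by norm_num [w]) fun g p t => by
      simp only [w, coe_sphereAct, map_add, map_smul, hρe]
  rcases le_total (t : ℝ) (1 / 2) with ht | ht
  · simp only [w]
    rw [max_eq_left (by linarith), max_eq_right (by linarith), zero_smul, add_zero,
      abs_of_nonpos (by linarith)]
    exact smul_add_smul_ne_zero (fun h => hp.1 (by rw [h, neg_neg])) (by linarith)
      (by linarith [t.2.1]) (by ring)
  · simp only [w]
    rw [max_eq_right (by linarith), max_eq_left (by linarith), zero_smul, zero_add,
      abs_of_nonneg (by linarith)]
    exact smul_add_smul_ne_zero hp.2 (by linarith [t.2.2]) (by linarith) (by ring)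

lemma eqTCcover_three_sphereAct {e f : Sph n} (he : e ∈ fixedSet (sphereAct ρ))
    (hf : f ∈ fixedSet (sphereAct ρ)) (hfe : f ≠ e) (hfe' : f ≠ -e) :
    eqTCcover (sphereAct ρ) 3 := by
  have hopen (e : Sph n) : IsOpen {p : Sph n × Sph n | p.1 ≠ -e ∧ p.2 ≠ -e} :=
    (isOpen_ne_fun continuous_fst continuous_const).inter
      (isOpen_ne_fun continuous_snd continuous_const)
  refine ⟨![{p | p.2 ≠ -p.1}, {p | p.1 ≠ -e ∧ p.2 ≠ -e}, {p | p.1 ≠ -f ∧ p.2 ≠ -f}], ?_, ?_, ?_⟩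
  · rw [Fin.forall_fin_succ, Fin.forall_fin_two]
    exact ⟨isOpen_ne_fun continuous_snd continuous_fst.neg, hopen e, hopen f⟩
  · refine eq_univ_of_forall fun p => mem_iUnion.2 ?_
    rw [Fin.exists_fin_succ, Fin.exists_fin_two]
    by_contra! ⟨hp₀, hpe, hpf⟩
    have hanti : p.2 = -p.1 := not_not.1 hp₀
    have hmem {x : Sph n} (hx : ¬(p.1 ≠ -x ∧ p.2 ≠ -x)) : p.1 = -x ∨ p.1 = x := by
      rw [hanti, neg_inj.ne] at hx
      tauto
    rcases hmem hpe with h | h <;> rcases hmem hpf with h' | h'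
    · exact hfe (neg_injective (h'.symm.trans h))
    · exact hfe' (h'.symm.trans h)
    · exact hfe' (neg_eq_iff_eq_neg.1 (h'.symm.trans h))
    · exact hfe (h'.symm.trans h)
  · rw [Fin.forall_fin_succ, Fin.forall_fin_two]
    exact ⟨hasEquivariantPlanner_not_antipodal, hasEquivariantPlanner_ne_neg he,
      hasEquivariantPlanner_ne_neg hf⟩

lemma exists_mem_sphere_ne_ne_neg {E : Type*} [NormedAddCommGroup E] [InnerProductSpace ℝ E]
    {V : Submodule ℝ E} [FiniteDimensional ℝ V] (hV : 1 < finrank ℝ V) :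
    ∃ e f : Metric.sphere (0 : E) 1, (e : E) ∈ V ∧ (f : E) ∈ V ∧ f ≠ e ∧ f ≠ -e := by
  let b := stdOrthonormalBasis ℝ V
  let u (i : Fin (finrank ℝ V)) : Metric.sphere (0 : E) 1 :=
    ⟨b i, mem_sphere_zero_iff_norm.2 (b.orthonormal.1 i)⟩
  let e := u ⟨0, zero_lt_one.trans hV⟩
  let f := u ⟨1, hV⟩
  have horth : inner ℝ (f : E) e = 0 := b.orthonormal.2 (by simp)
  have hself : inner ℝ (e : E) e ≠ 0 := inner_self_ne_zero.2 (ne_zero_of_mem_unit_sphere e)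
  refine ⟨e, f, SetLike.coe_mem _, SetLike.coe_mem _, fun h => ?_, fun h => ?_⟩
  · rw [h] at horth
    exact hself horth
  · rw [h, coe_neg_sphere, inner_neg_left, neg_eq_zero] at horth
    exact hself horth

end UpperBound

lemma isEmbedding_sphere_subtype {E : Type*} [NormedAddCommGroup E] [NormedSpace ℝ E]
    (V : Submodule ℝ E) {r : ℝ} :
    IsEmbedding fun v : Metric.sphere (0 : V) r =>
      (⟨v, mem_sphere_zero_iff_norm.2 (mem_sphere_zero_iff_norm.1 v.2)⟩ :
        Metric.sphere (0 : E) r) :=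
  .of_comp (g := Subtype.val) (by fun_prop) continuous_subtype_val
    ((IsEmbedding.subtypeVal (p := (· ∈ V))).comp .subtypeVal)

lemma not_eqTCcover_two_sphereAct {G : Type*} [Monoid G] {n : ℕ}
    {ρ : G →* (EuclideanSpace ℝ (Fin (n + 1)) ≃ₗᵢ[ℝ] EuclideanSpace ℝ (Fin (n + 1)))}
    {V : Submodule ℝ (EuclideanSpace ℝ (Fin (n + 1)))} (hV : 1 < finrank ℝ V)
    (hfix : ∀ x : Sph n, x ∈ fixedSet (sphereAct ρ) ↔ (x : EuclideanSpace ℝ (Fin (n + 1))) ∈ V)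
    (hodd : Odd (n + 1) ∨ Odd (finrank ℝ V)) : ¬ eqTCcover (sphereAct ρ) 2 := by
  intro h
  rcases hodd with hn | hV'
  · have hle : finrank ℝ V ≤ n + 1 := V.finrank_le.trans_eq finrank_euclideanSpace_fin
    exact not_TCcover_sphere_two (E := EuclideanSpace ℝ (Fin (n + 1)))
      (by rw [finrank_euclideanSpace_fin]; exact hV.trans_le hle)
      (by rwa [finrank_euclideanSpace_fin]) (TCcover_of_eqTCcover h)
  · refine not_TCcover_sphere_two hV hV' (TCcover_of_eqTCcover_of_range_eq_fixedSet
      (isEmbedding_sphere_subtype V) (ext fun x => ?_) h)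
    rw [hfix]
    exact ⟨fun ⟨v, hv⟩ => hv ▸ v.1.2, fun hx => ⟨⟨⟨x, hx⟩, by simp⟩, rfl⟩⟩

end PaperTC

open PaperTC

theorem eqTC_linear_zmod_sphere_eq_three_general {G : Type*} [Monoid G] {n k : ℕ} (hk : 0 < k)
    (ρ : G →* (EuclideanSpace ℝ (Fin (n + 1)) ≃ₗᵢ[ℝ] EuclideanSpace ℝ (Fin (n + 1))))
    (V : Submodule ℝ (EuclideanSpace ℝ (Fin (n + 1)))) (hV : Module.finrank ℝ V = k + 1)
    (hfixV : ∀ x : ↥(Sph n),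
      (∀ g : G, sphereAct ρ g x = x) ↔ (x : EuclideanSpace ℝ (Fin (n + 1))) ∈ V)
    (heven : Even n ∨ Even k) :
    eqTC (sphereAct ρ) = 3 := by
  have hV' : 1 < Module.finrank ℝ V := by omega
  obtain ⟨e, f, he, hf, hfe, hfe'⟩ := exists_mem_sphere_ne_ne_neg hV'
  have hupper : eqTCcover (sphereAct ρ) 3 :=
    eqTCcover_three_sphereAct ((hfixV e).2 he) ((hfixV f).2 hf) hfe hfe'
  have hlower : ¬ eqTCcover (sphereAct ρ) 2 :=
    not_eqTCcover_two_sphereAct hV' hfixV (heven.imp Even.add_one fun h => hV ▸ h.add_one)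
  rw [eqTC_eq_add_one hupper hlower]
  norm_num

/-- Let `ℤ/p` (`p` prime) act linearly on `S^n` with fixed point set the
great `k`-sphere cut out by a pointwise-fixed subspace `V` of dimension `k + 1`, where
`0 < k < n`.  If `n` is even or `k` is even, then `TC_{ℤ/p}(S^n) = 3`. -/
theorem eqTC_linear_zmod_sphere_eq_three (p : ℕ) (hp : p.Prime) (n k : ℕ)
    (hk : 0 < k) (hkn : k < n)
    (ρ : Multiplicative (ZMod p) →*
      (EuclideanSpace ℝ (Fin (n + 1)) ≃ₗᵢ[ℝ] EuclideanSpace ℝ (Fin (n + 1))))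
    (V : Submodule ℝ (EuclideanSpace ℝ (Fin (n + 1))))
    (hV : Module.finrank ℝ V = k + 1)
    (hVfix : ∀ g : Multiplicative (ZMod p), ∀ v ∈ V, ρ g v = v)
    (hfixV : ∀ x : ↥(Sph n),
      (∀ g : Multiplicative (ZMod p), sphereAct ρ g x = x) ↔
        (x : EuclideanSpace ℝ (Fin (n + 1))) ∈ V)
    (heven : Even n ∨ Even k) :
    eqTC (sphereAct ρ) = 3 :=
  eqTC_linear_zmod_sphere_eq_three_general hk ρ V hV hfixV heven
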